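/- Let (M,𝒳) be a small n-exact category, Y and X^{n+1} objects of M, and let ξ : 0 → H_Y → E¹ → ⋯ → Eⁿ → H_{X^{n+1}} → 0 be a complex in Mod(M) such that each E^i is Eff-closed and every homology object of ξ is weakly effaceable (i.e., ξ is an n-fold extension of H_{X^{n+1}} by H_Y in the localization of Mod(M) at the weakly effaceable functors). Then there exists an 𝒳-admissible n-exact sequence Y → Y¹ → ⋯ → Yⁿ → X^{n+1} in M such that ξ is connected to the complex 0 → H_Y → H_{Y¹} → ⋯ → H_{Yⁿ} → H_{X^{n+1}} → 0 by a finite zigzag of complexes of the same form (each with Eff-closed middle terms and all homology weakly effaceable) and morphisms of complexes restricting to the identity on H_Y and on H_{X^{n+1}}; that is, up to Yoneda equivalence the essential image of M in the localization is closed under n-extensions. -/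

import Mathlib

open CategoryTheory CategoryTheory.Limits Opposite

attribute [local instance] CategoryTheory.Limits.hasBinaryBiproducts_of_finite_biproducts

universe u

namespace NExactCat

variable {M : Type u} [SmallCategory M] [Preadditive M] [HasFiniteBiproducts M]

/-- A sequence (`ℕ`-indexed, only the indices `0, …, n+1` of the objects and `0, …, n` of the
maps being relevant) of composable morphisms in an additive category. -/
structure NSeq (M : Type u) [SmallCategory M] where
  X : ℕ → M
  d : ∀ i, X i ⟶ X (i + 1)

/-- `S` is a complex (in degrees `0, …, n+1`). -/
def NSeq.IsComplex (n : ℕ) (S : NSeq M) : Prop :=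
  ∀ i, i + 1 ≤ n → S.d i ≫ S.d (i + 1) = 0

/-- `(d¹,…,dⁿ)` is an `n`-cokernel of `d⁰`: for every `W` the sequence
`0 → Hom(X^{n+1},W) → Hom(Xⁿ,W) → ⋯ → Hom(X⁰,W)` of abelian groups is exact. -/
def RightNExact (n : ℕ) (S : NSeq M) : Prop :=
  (∀ W : M, Function.Injective fun g : S.X (n + 1) ⟶ W => S.d n ≫ g) ∧
  (∀ W : M, ∀ i, i < n → Function.Exact
      (fun g : S.X (i + 2) ⟶ W => S.d (i + 1) ≫ g)
      (fun g : S.X (i + 1) ⟶ W => S.d i ≫ g))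

/-- `(d⁰,…,d^{n-1})` is an `n`-kernel of `dⁿ`: for every `W` the sequence
`0 → Hom(W,X⁰) → Hom(W,X¹) → ⋯ → Hom(W,X^{n+1})` of abelian groups is exact. -/
def LeftNExact (n : ℕ) (S : NSeq M) : Prop :=
  (∀ W : M, Function.Injective fun g : W ⟶ S.X 0 => g ≫ S.d 0) ∧
  (∀ W : M, ∀ i, i < n → Function.Exact
      (fun g : W ⟶ S.X i => g ≫ S.d i)
      (fun g : W ⟶ S.X (i + 1) => g ≫ S.d (i + 1)))

/-- An `n`-exact sequence: a complex which is both a left and a right `n`-exact sequence. -/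
def IsNExactSeq (n : ℕ) (S : NSeq M) : Prop :=
  S.IsComplex n ∧ LeftNExact n S ∧ RightNExact n S

/-- `f` is a morphism of complexes `S ⟶ T` (in degrees `0, …, n+1`). -/
def IsNSeqHom (n : ℕ) (S T : NSeq M) (f : ∀ i, S.X i ⟶ T.X i) : Prop :=
  ∀ i, i ≤ n → S.d i ≫ f (i + 1) = f i ≫ T.d i

/-- There is a weak isomorphism `S ⟶ T`: a morphism of complexes whose components `f k` and
`f (k+1)` are isomorphisms for some `k ∈ {0,…,n+1}`, indices taken modulo `n+2`. -/
def ExistsWeakIso (n : ℕ) (S T : NSeq M) : Prop :=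
  ∃ f : ∀ i, S.X i ⟶ T.X i, IsNSeqHom n S T f ∧
    ((∃ k ≤ n, IsIso (f k) ∧ IsIso (f (k + 1))) ∨ (IsIso (f (n + 1)) ∧ IsIso (f 0)))

/-- The objects of the mapping cone `X⁰ → X¹ ⊞ Y⁰ → ⋯ → Xⁿ ⊞ Y^{n-1} → Yⁿ` of a morphism of
complexes indexed by `0, …, n`. -/
noncomputable def coneX (n : ℕ) (S T : NSeq M) (i : ℕ) : M :=
  if i = 0 then S.X 0 else if i ≤ n then S.X i ⊞ T.X (i - 1) else T.X n

lemma coneX_zero (n : ℕ) (S T : NSeq M) : coneX n S T 0 = S.X 0 := by simp [coneX]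

lemma coneX_mid (n : ℕ) (S T : NSeq M) {i : ℕ} (h0 : i ≠ 0) (h1 : i ≤ n) :
    coneX n S T i = (S.X i ⊞ T.X (i - 1)) := by simp [coneX, h0, h1]

lemma coneX_top (n : ℕ) (S T : NSeq M) {i : ℕ} (h : n < i) :
    coneX n S T i = T.X n := by
  have h0 : i ≠ 0 := by omega
  have h1 : ¬ i ≤ n := by omega
  simp [coneX, h0, h1]

/-- The differentials of the mapping cone, given in matrix form by
`d_C^k = ((-d_X^{k+1}, 0), (f^{k+1}, d_Y^k))`. -/
noncomputable def coneD (n : ℕ) (S T : NSeq M) (f : ∀ i, S.X i ⟶ T.X i) (i : ℕ) :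
    coneX n S T i ⟶ coneX n S T (i + 1) :=
  if h0 : i = 0 then
    (if h1 : 1 ≤ n then
      eqToHom (show coneX n S T i = S.X 0 by subst h0; exact coneX_zero n S T) ≫
        biprod.lift (-(S.d 0)) (f 0) ≫
        eqToHom (show (S.X 1 ⊞ T.X 0) = coneX n S T (i + 1) by
          subst h0; exact (coneX_mid n S T one_ne_zero h1).symm)
    else 0)
  else if h1 : i + 1 ≤ n then
    eqToHom (coneX_mid n S T h0 (by omega)) ≫
      biprod.lift (biprod.fst ≫ (-(S.d i)))
        (biprod.fst ≫ f i + biprod.snd ≫ (T.d (i - 1) ≫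
          eqToHom (congrArg T.X (by omega : i - 1 + 1 = i)))) ≫
      eqToHom ((coneX_mid n S T (Nat.succ_ne_zero i) h1).symm)
  else if h2 : i = n then
    eqToHom (coneX_mid n S T h0 (by omega)) ≫
      biprod.desc (f i) (T.d (i - 1) ≫ eqToHom (congrArg T.X (by omega : i - 1 + 1 = i))) ≫
      eqToHom (show T.X i = coneX n S T (i + 1) by
        rw [h2]; exact (coneX_top n S T (by omega)).symm)
  else 0

/-- The mapping cone, as an `NSeq`. -/
noncomputable def cone (n : ℕ) (S T : NSeq M) (f : ∀ i, S.X i ⟶ T.X i) : NSeq M :=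
  ⟨coneX n S T, coneD n S T f⟩

/-- The diagram determined by `f` is an `n`-pushout: the mapping cone is a right `n`-exact
sequence. -/
def IsNPushout (n : ℕ) (S T : NSeq M) (f : ∀ i, S.X i ⟶ T.X i) : Prop :=
  RightNExact n (cone n S T f)

/-- The diagram determined by `f` is an `n`-pullback: the mapping cone is a left `n`-exact
sequence. -/
def IsNPullback (n : ℕ) (S T : NSeq M) (f : ∀ i, S.X i ⟶ T.X i) : Prop :=
  LeftNExact n (cone n S T f)

/-- The shift of a sequence, `(shift S).X i = S.X (i+1)`. -/
def NSeq.shift (S : NSeq M) : NSeq M :=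
  ⟨fun i => S.X (i + 1), fun i => S.d (i + 1)⟩

/-- `g` is an `𝒳`-admissible monomorphism: it occurs as the first differential of a member
of `𝒳`. -/
def AdmMono (𝒳 : Set (NSeq M)) {A B : M} (g : A ⟶ B) : Prop :=
  ∃ Z ∈ 𝒳, ∃ (h0 : Z.X 0 = A) (h1 : Z.X 1 = B), Z.d 0 = eqToHom h0 ≫ g ≫ eqToHom h1.symm

/-- `g` is an `𝒳`-admissible epimorphism: it occurs as the last differential of a member
of `𝒳`. -/
def AdmEpi (n : ℕ) (𝒳 : Set (NSeq M)) {A B : M} (g : A ⟶ B) : Prop :=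
  ∃ Z ∈ 𝒳, ∃ (h0 : Z.X n = A) (h1 : Z.X (n + 1) = B),
    Z.d n = eqToHom h0 ≫ g ≫ eqToHom h1.symm

/-- `𝒳` is an `n`-exact structure on `M`: a class of `n`-exact sequences, closed under weak
isomorphisms, satisfying the axioms (E0), (E1), (E1ᵒᵖ), (E2) and (E2ᵒᵖ). -/
structure IsNExactStructure (n : ℕ) (𝒳 : Set (NSeq M)) : Prop where
  /-- members of `𝒳` are `n`-exact sequences -/
  nExact : ∀ Z ∈ 𝒳, IsNExactSeq n Z
  /-- `𝒳` is closed under weak isomorphisms -/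
  weakIsoClosed : ∀ Z ∈ 𝒳, ∀ T : NSeq M, IsNExactSeq n T →
      (ExistsWeakIso n Z T ∨ ExistsWeakIso n T Z) → T ∈ 𝒳
  /-- (E0): the zero sequence `0 → 0 → ⋯ → 0` is admissible -/
  zero_mem : ∃ Z ∈ 𝒳, ∀ i ≤ n + 1, IsZero (Z.X i)
  /-- (E1): admissible monomorphisms are closed under composition -/
  monoComp : ∀ {A B C : M} (g₁ : A ⟶ B) (g₂ : B ⟶ C),
      AdmMono 𝒳 g₁ → AdmMono 𝒳 g₂ → AdmMono 𝒳 (g₁ ≫ g₂)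
  /-- (E1ᵒᵖ): admissible epimorphisms are closed under composition -/
  epiComp : ∀ {A B C : M} (g₁ : A ⟶ B) (g₂ : B ⟶ C),
      AdmEpi n 𝒳 g₁ → AdmEpi n 𝒳 g₂ → AdmEpi n 𝒳 (g₁ ≫ g₂)
  /-- (E2): existence of `n`-pushouts along morphisms out of `X⁰`, with `d_Y⁰` an admissible
  monomorphism -/
  pushout : ∀ Z ∈ 𝒳, ∀ (W : M) (f0 : Z.X 0 ⟶ W),
      ∃ (T : NSeq M) (f : ∀ i, Z.X i ⟶ T.X i) (h : T.X 0 = W),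
        f 0 = f0 ≫ eqToHom h.symm ∧
        (∀ i, i + 1 ≤ n → Z.d i ≫ f (i + 1) = f i ≫ T.d i) ∧
        IsNPushout n Z T f ∧ AdmMono 𝒳 (T.d 0)
  /-- (E2ᵒᵖ): existence of `n`-pullbacks along morphisms into `Y^{n+1}`, with `d_X^n` an
  admissible epimorphism -/
  pullback : ∀ Z ∈ 𝒳, ∀ (A : M) (g : A ⟶ Z.X (n + 1)),
      ∃ (T : NSeq M) (f : ∀ i, T.X i ⟶ Z.X (i + 1)) (h : T.X n = A),
        f n = eqToHom h ≫ g ∧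
        (∀ i, i + 1 ≤ n → T.d i ≫ f (i + 1) = f i ≫ Z.d (i + 1)) ∧
        IsNPullback n T Z.shift f ∧ AdmEpi n 𝒳 (T.d (n - 1))

end NExactCat

namespace NExactCat

variable {M : Type u} [SmallCategory M] [Preadditive M] [HasFiniteBiproducts M]

/-- A functor `F ∈ Mod(M)` is weakly effaceable if every element of `F(X)` is killed by
restriction along some admissible epimorphism `V ⟶ X`. -/
def WeaklyEffaceable (n : ℕ) (𝒳 : Set (NSeq M)) (F : Mᵒᵖ ⥤ AddCommGrpCat.{u}) : Prop :=
  ∀ (X : M) (x : F.obj (op X)), ∃ (V : M) (g : V ⟶ X),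
    AdmEpi n 𝒳 g ∧ F.map g.op x = 0

/-- A functor `F ∈ Mod(M)` is `Eff`-closed (lies in `L₁(M)`) if for every admissible `n`-exact
sequence `Z` the sequence `0 → F(Z^{n+1}) → F(Zⁿ) → F(Z^{n-1})` of abelian groups is exact. -/
def EffClosed (n : ℕ) (𝒳 : Set (NSeq M)) (F : Mᵒᵖ ⥤ AddCommGrpCat.{u}) : Prop :=
  ∀ Z ∈ 𝒳, ∀ j : ℕ, j + 1 = n →
    Function.Injective (fun x : F.obj (op (Z.X (n + 1))) => F.map (Z.d n).op x) ∧
    Function.Exact (fun x : F.obj (op (Z.X (j + 2))) => F.map (Z.d (j + 1)).op x)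
      (fun x : F.obj (op (Z.X (j + 1))) => F.map (Z.d j).op x)

/-- A complex `0 → H_A → F¹ → ⋯ → Fⁿ → H_B → 0` in `Mod(M)` whose end terms are the
representable functors of `A` and `B`. -/
structure RepSeq (M : Type u) [SmallCategory M] [Preadditive M] (n : ℕ) (A B : M) where
  F : ℕ → (Mᵒᵖ ⥤ AddCommGrpCat.{u})
  τ : ∀ i, F i ⟶ F (i + 1)
  hF0 : F 0 = preadditiveYoneda.obj A
  hFtop : F (n + 1) = preadditiveYoneda.obj B
  isComplex : ∀ i, i + 1 ≤ n → τ i ≫ τ (i + 1) = 0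

/-- Every homology object of the complex `0 → F 0 → ⋯ → F (n+1) → 0` (homology being
computed objectwise, as in the functor category `Mod(M)`) is weakly effaceable. -/
def RepSeq.HomologyWeaklyEffaceable {n : ℕ} {A B : M} (𝒳 : Set (NSeq M))
    (S : RepSeq M n A B) : Prop :=
  (∀ (X : M) (x : (S.F 0).obj (op X)), (S.τ 0).app (op X) x = 0 →
    ∃ (V : M) (g : V ⟶ X), AdmEpi n 𝒳 g ∧ (S.F 0).map g.op x = 0) ∧
  (∀ i, i + 1 ≤ n → ∀ (X : M) (x : (S.F (i + 1)).obj (op X)),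
    (S.τ (i + 1)).app (op X) x = 0 →
    ∃ (V : M) (g : V ⟶ X), AdmEpi n 𝒳 g ∧
      ∃ y : (S.F i).obj (op V), (S.τ i).app (op V) y = (S.F (i + 1)).map g.op x) ∧
  (∀ (X : M) (x : (S.F (n + 1)).obj (op X)),
    ∃ (V : M) (g : V ⟶ X), AdmEpi n 𝒳 g ∧
      ∃ y : (S.F n).obj (op V), (S.τ n).app (op V) y = (S.F (n + 1)).map g.op x)

/-- `S` is an `n`-fold extension of `H_B` by `H_A` in the localization of `Mod(M)` at the
weakly effaceable functors: its middle terms are additive and `Eff`-closed, and every homology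
object of `S` is weakly effaceable. -/
def RepSeq.Good {n : ℕ} {A B : M} (𝒳 : Set (NSeq M)) (S : RepSeq M n A B) : Prop :=
  (∀ i, 1 ≤ i → i ≤ n → (S.F i).Additive ∧ EffClosed n 𝒳 (S.F i)) ∧
  S.HomologyWeaklyEffaceable 𝒳

/-- A morphism of such complexes restricting to the identity on the two end terms. -/
def RepSeqConnects {n : ℕ} {A B : M} (S T : RepSeq M n A B) : Prop :=
  ∃ φ : ∀ i, S.F i ⟶ T.F i,
    (∀ i, i ≤ n → S.τ i ≫ φ (i + 1) = φ i ≫ T.τ i) ∧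
    φ 0 = eqToHom (S.hF0.trans T.hF0.symm) ∧
    φ (n + 1) = eqToHom (S.hFtop.trans T.hFtop.symm)

/-- One step of the zigzag: both complexes are of the required form and there is a morphism
between them (in either direction) restricting to the identity on the end terms. -/
def RepSeqStep {n : ℕ} {A B : M} (𝒳 : Set (NSeq M)) (S T : RepSeq M n A B) : Prop :=
  S.Good 𝒳 ∧ T.Good 𝒳 ∧ (RepSeqConnects S T ∨ RepSeqConnects T S)

/-- The complex `0 → H_{Z⁰} → H_{Z¹} → ⋯ → H_{Z^{n+1}} → 0` of representable functors
associated with a complex `Z` in `M`. -/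
def repSeqOf (n : ℕ) (Z : NSeq M) {A B : M} (h0 : Z.X 0 = A) (htop : Z.X (n + 1) = B)
    (hcx : Z.IsComplex n) : RepSeq M n A B where
  F i := preadditiveYoneda.obj (Z.X i)
  τ i := preadditiveYoneda.map (Z.d i)
  hF0 := by show preadditiveYoneda.obj (Z.X 0) = _; rw [h0]
  hFtop := by show preadditiveYoneda.obj (Z.X (n + 1)) = _; rw [htop]
  isComplex i hi := by
    rw [← Functor.map_comp, hcx i hi]
    exact Functor.map_zero _ _ _

end NExactCat

namespace NExactCat

set_option linter.unusedSectionVars false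

section Auxiliary

variable {M : Type u} [SmallCategory M] [Preadditive M] [HasFiniteBiproducts M]

/-! ### Chain maps and homotopies between sequences -/

section Chains

variable {C : Type*} [Category C] [Preadditive C]

lemma exists_chainMap (S T : ℕ → C) (dS : ∀ i, S i ⟶ S (i + 1)) (dT : ∀ i, T i ⟶ T (i + 1))
    (N : ℕ) (hT : ∀ i, i + 2 ≤ N → dT i ≫ dT (i + 1) = 0)
    (hext : ∀ i, i + 2 ≤ N → ∀ α : S (i + 1) ⟶ T (i + 2), dS i ≫ α = 0 →
      ∃ β, dS (i + 1) ≫ β = α)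
    (f₀ : S 0 ⟶ T 0) (f₁ : S 1 ⟶ T 1) (h : dS 0 ≫ f₁ = f₀ ≫ dT 0) :
    ∃ f : ∀ i, S i ⟶ T i, f 0 = f₀ ∧ f 1 = f₁ ∧
      ∀ i, i + 1 ≤ N → dS i ≫ f (i + 1) = f i ≫ dT i := by
  induction N with
  | zero =>
    exact ⟨Function.update (Function.update (fun _ => 0) 0 f₀) 1 f₁, by simp, by simp,
      fun i hi => by omega⟩
  | succ N ih =>
    obtain ⟨f, hf₀, hf₁, hf⟩ := ih (fun i hi => hT i (by omega)) (fun i hi => hext i (by omega))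
    rcases N with _ | N
    · refine ⟨f, hf₀, hf₁, fun i hi => ?_⟩
      obtain rfl : i = 0 := by omega
      rw [hf₀, hf₁, h]
    · obtain ⟨β, hβ⟩ := hext N le_rfl (f (N + 1) ≫ dT (N + 1)) (by
        rw [← Category.assoc, hf N le_rfl, Category.assoc, hT N le_rfl, comp_zero])
      refine ⟨Function.update f (N + 2) β, by simp [hf₀], by simp [hf₁], fun i hi => ?_⟩
      rcases Nat.lt_or_ge i (N + 1) with hlt | hge
      · rw [Function.update_of_ne (by omega), Function.update_of_ne (by omega), hf i (by omega)]
      · obtain rfl : i = N + 1 := by omega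
        rw [Function.update_self, Function.update_of_ne (by omega), hβ]

lemma exists_homotopy (S T : ℕ → C) (dS : ∀ i, S i ⟶ S (i + 1)) (dT : ∀ i, T i ⟶ T (i + 1))
    (n : ℕ) (hT : ∀ i, i + 1 ≤ n → dT i ≫ dT (i + 1) = 0)
    (hext : ∀ i, i + 1 ≤ n → ∀ α : S (i + 1) ⟶ T (i + 1), dS i ≫ α = 0 →
      ∃ β, dS (i + 1) ≫ β = α)
    (f : ∀ i, S i ⟶ T i) (hf : ∀ i, i + 1 ≤ n → dS i ≫ f (i + 1) = f i ≫ dT i)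
    (h0 : f 0 = 0) :
    ∃ h : ∀ i, S (i + 1) ⟶ T i, h 0 = 0 ∧
      ∀ i, i + 1 ≤ n → f (i + 1) = h i ≫ dT i + dS (i + 1) ≫ h (i + 1) := by
  induction n with
  | zero => exact ⟨fun _ => 0, rfl, fun i hi => by omega⟩
  | succ n ih =>
    obtain ⟨h, hh₀, hh⟩ := ih (fun i hi => hT i (by omega)) (fun i hi => hext i (by omega))
      (fun i hi => hf i (by omega))
    obtain ⟨β, hβ⟩ := hext n le_rfl (f (n + 1) - h n ≫ dT n) (by
      rw [Preadditive.comp_sub, hf n le_rfl]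
      rcases n with _ | n
      · simp [h0, hh₀]
      · rw [hh n le_rfl, Preadditive.add_comp, Category.assoc, hT n (by omega)]
        simp)
    refine ⟨Function.update h (n + 1) β, by simp [hh₀], fun i hi => ?_⟩
    rcases Nat.lt_or_ge i n with hlt | hge
    · rw [Function.update_of_ne (by omega), Function.update_of_ne (by omega), hh i (by omega)]
    · obtain rfl : i = n := by omega
      rw [Function.update_self, Function.update_of_ne (by omega), hβ]
      abel

/-- A sequence can be cut off after degree `N` and continued by a single morphism
`q : G N ⟶ Q`; the result agrees with `G` up to the comparison isomorphisms `θ`. -/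
lemma exists_splice (G : ℕ → C) (D : ∀ i, G i ⟶ G (i + 1)) (N : ℕ) {Q : C} (q : G N ⟶ Q) :
    ∃ (F : ℕ → C) (τ : ∀ i, F i ⟶ F (i + 1)) (θ : ∀ i, F i ⟶ G i) (θ' : ∀ i, G i ⟶ F i)
      (h0 : F 0 = G 0) (hQ : F (N + 1) = Q),
      (∀ i, i ≤ N → θ i ≫ θ' i = 𝟙 _ ∧ θ' i ≫ θ i = 𝟙 _) ∧
      (∀ i, i < N → τ i = θ i ≫ D i ≫ θ' (i + 1)) ∧
      τ N = θ N ≫ q ≫ eqToHom hQ.symm ∧ θ 0 = eqToHom h0 := by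
  classical
  let F : ℕ → C := fun i => if i ≤ N then G i else Q
  have hlo : ∀ i, i ≤ N → F i = G i := fun i hi => if_pos hi
  have hQ : F (N + 1) = Q := if_neg (by omega)
  let θ : ∀ i, F i ⟶ G i := fun i => if h : i ≤ N then eqToHom (hlo i h) else 0
  let θ' : ∀ i, G i ⟶ F i := fun i => if h : i ≤ N then eqToHom (hlo i h).symm else 0
  let τ : ∀ i, F i ⟶ F (i + 1) := fun i =>
    if i < N then θ i ≫ D i ≫ θ' (i + 1)
    else if h : i = N then θ i ≫ eqToHom (by rw [h]) ≫ q ≫ eqToHom (by rw [h, hQ]) else 0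
  refine ⟨F, τ, θ, θ', hlo 0 (Nat.zero_le _), hQ, fun i hi => ?_, fun i hi => ?_, ?_, ?_⟩
  · simp [θ, θ', hi]
  · simp [τ, hi]
  · simp [τ]
  · simp [θ]

end Chains

/-! ### Right `n`-exact sequences and `n`-pushouts -/

lemma RightNExact.eq_zero {n : ℕ} {S : NSeq M} (h : RightNExact n S) {W : M}
    (g : S.X (n + 1) ⟶ W) (hg : S.d n ≫ g = 0) : g = 0 :=
  h.1 W (show S.d n ≫ g = S.d n ≫ 0 by rw [hg, comp_zero])

lemma RightNExact.exists_desc {n : ℕ} {S : NSeq M} (h : RightNExact n S) {W : M} {i : ℕ}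
    (hi : i < n) (α : S.X (i + 1) ⟶ W) (hα : S.d i ≫ α = 0) :
    ∃ β, S.d (i + 1) ≫ β = α :=
  (h.2 W i hi α).1 hα

lemma RightNExact.d_comp_d {n : ℕ} {S : NSeq M} (h : RightNExact n S) {i : ℕ} (hi : i < n) :
    S.d i ≫ S.d (i + 1) = 0 :=
  (h.2 _ i hi (S.d (i + 1))).2 ⟨𝟙 _, Category.comp_id _⟩

lemma LeftNExact.exists_lift {n : ℕ} {S : NSeq M} (h : LeftNExact n S) {W : M} {i : ℕ}
    (hi : i < n) (α : W ⟶ S.X (i + 1)) (hα : α ≫ S.d (i + 1) = 0) :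
    ∃ β, β ≫ S.d i = α :=
  (h.2 W i hi α).1 hα

section Cone

variable {m : ℕ} {S T : NSeq M} {f : ∀ i, S.X i ⟶ T.X i}

lemma coneX_succ (S T : NSeq M) {i : ℕ} (hi : i ≤ m) :
    coneX (m + 1) S T (i + 1) = (S.X (i + 1) ⊞ T.X i) :=
  coneX_mid (m + 1) S T (Nat.succ_ne_zero i) (by omega)

lemma coneX_last (S T : NSeq M) : coneX (m + 1) S T (m + 2) = T.X (m + 1) :=
  coneX_top (m + 1) S T (Nat.lt_succ_self _)

lemma coneD_zero : coneD (m + 1) S T f 0 =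
    eqToHom (coneX_zero _ S T) ≫ biprod.lift (-(S.d 0)) (f 0) ≫
      eqToHom (coneX_succ S T (Nat.zero_le m)).symm := by
  simp [coneD]

lemma coneD_succ {i : ℕ} (hi : i + 1 ≤ m) : coneD (m + 1) S T f (i + 1) =
    eqToHom (coneX_succ S T (by omega)) ≫
      biprod.lift (biprod.fst ≫ (-(S.d (i + 1)))) (biprod.fst ≫ f (i + 1) + biprod.snd ≫ T.d i) ≫
      eqToHom (coneX_succ S T hi).symm := by
  have h : i + 1 + 1 ≤ m + 1 := by omega
  simp only [coneD, h, dif_pos, Nat.succ_ne_zero, dif_neg, not_false_eq_true]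
  simp

lemma coneD_last : coneD (m + 1) S T f (m + 1) =
    eqToHom (coneX_succ S T le_rfl) ≫ biprod.desc (f (m + 1)) (T.d m) ≫
      eqToHom (coneX_last S T).symm := by
  have h : ¬ (m + 1 + 1 ≤ m + 1) := by omega
  simp only [coneD, h, Nat.succ_ne_zero, dif_neg, not_false_eq_true, dif_pos]
  simp

lemma IsNPushout.eq_zero_of_coneD_comp (hp : IsNPushout (m + 1) S T f) {W : M}
    (g : coneX (m + 1) S T (m + 2) ⟶ W) (hg : coneD (m + 1) S T f (m + 1) ≫ g = 0) : g = 0 :=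
  RightNExact.eq_zero hp g hg

lemma IsNPushout.exists_coneD_comp (hp : IsNPushout (m + 1) S T f) {W : M} {i : ℕ} (hi : i ≤ m)
    (α : coneX (m + 1) S T (i + 1) ⟶ W) (hα : coneD (m + 1) S T f i ≫ α = 0) :
    ∃ β : coneX (m + 1) S T (i + 2) ⟶ W, coneD (m + 1) S T f (i + 1) ≫ β = α :=
  RightNExact.exists_desc hp (Nat.lt_succ_of_le hi) α hα

lemma IsNPushout.eq_zero (hp : IsNPushout (m + 1) S T f) {W : M} (g : T.X (m + 1) ⟶ W)
    (hf : f (m + 1) ≫ g = 0) (hT : T.d m ≫ g = 0) : g = 0 := by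
  have h := hp.eq_zero_of_coneD_comp (eqToHom (coneX_last S T) ≫ g) (by
    rw [coneD_last]
    simp only [Category.assoc, eqToHom_trans_assoc, eqToHom_refl, Category.id_comp]
    rw [show biprod.desc (f (m + 1)) (T.d m) ≫ g = 0 by ext <;> simp [hf, hT], comp_zero])
  simpa using h

lemma coneD_comp_desc {i : ℕ} (hi : i ≤ m) {W : M}
    (a : S.X (i + 1) ⟶ W) (b : T.X i ⟶ W) (hab : S.d i ≫ a = f i ≫ b)
    (hb : ∀ j (h : j + 1 = i), T.d j ≫ eqToHom (congrArg T.X h) ≫ b = 0) :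
    coneD (m + 1) S T f i ≫ eqToHom (coneX_succ S T hi) ≫ biprod.desc a b = 0 := by
  rcases i with _ | i
  · simp [coneD_zero, hab]
  · have hb' : T.d i ≫ b = 0 := by simpa using hb i rfl
    have : biprod.lift (biprod.fst ≫ (-(S.d (i + 1))))
        (biprod.fst ≫ f (i + 1) + biprod.snd ≫ T.d i) ≫ biprod.desc a b = 0 := by
      ext <;> simp [hab, hb']
    rw [coneD_succ hi]
    simp only [Category.assoc, eqToHom_trans_assoc, eqToHom_refl, Category.id_comp]
    rw [this, comp_zero]

lemma IsNPushout.exists_desc_last (hp : IsNPushout (m + 1) S T f) {W : M}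
    (a : S.X (m + 1) ⟶ W) (b : T.X m ⟶ W) (hab : S.d m ≫ a = f m ≫ b)
    (hb : ∀ j (h : j + 1 = m), T.d j ≫ eqToHom (congrArg T.X h) ≫ b = 0) :
    ∃ g : T.X (m + 1) ⟶ W, f (m + 1) ≫ g = a ∧ T.d m ≫ g = b := by
  obtain ⟨g, hg⟩ := hp.exists_coneD_comp le_rfl _
    (coneD_comp_desc le_rfl a b hab hb)
  rw [coneD_last, Category.assoc, Category.assoc, cancel_epi] at hg
  exact ⟨eqToHom (coneX_last S T).symm ≫ g, by simpa using biprod.inl ≫= hg,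
    by simpa using biprod.inr ≫= hg⟩

lemma IsNPushout.exists_desc (hp : IsNPushout (m + 1) S T f) {i : ℕ} (hi : i ≤ m) {W : M}
    (a : S.X (i + 1) ⟶ W) (b : T.X i ⟶ W) (hab : S.d i ≫ a = f i ≫ b)
    (hb : ∀ j (h : j + 1 = i), T.d j ≫ eqToHom (congrArg T.X h) ≫ b = 0) :
    ∃ g : T.X (i + 1) ⟶ W, T.d i ≫ g = b := by
  obtain rfl | hlt := hi.eq_or_lt
  · obtain ⟨g, -, hg⟩ := hp.exists_desc_last a b hab hb
    exact ⟨g, hg⟩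
  obtain ⟨g, hg⟩ := hp.exists_coneD_comp hi _
    (coneD_comp_desc hi a b hab hb)
  rw [coneD_succ hlt, Category.assoc, Category.assoc, cancel_epi] at hg
  have hinr : biprod.inr ≫ biprod.lift (biprod.fst ≫ (-(S.d (i + 1))))
      (biprod.fst ≫ f (i + 1) + biprod.snd ≫ T.d i) = T.d i ≫ biprod.inr := by
    ext <;> simp
  refine ⟨biprod.inr ≫ eqToHom (coneX_succ S T hlt).symm ≫ g, ?_⟩
  rw [← Category.assoc (T.d i), ← hinr, Category.assoc, hg, biprod.inr_desc]

lemma IsNPushout.d_comp_d (hp : IsNPushout (m + 1) S T f) {i : ℕ} (hi : i + 1 ≤ m) :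
    T.d i ≫ T.d (i + 1) = 0 := by
  have h : coneD (m + 1) S T f (i + 1) ≫ coneD (m + 1) S T f (i + 2) = 0 :=
    RightNExact.d_comp_d hp (show i + 1 < m + 1 by omega)
  obtain rfl | hlt := hi.eq_or_lt
  · rw [coneD_succ le_rfl, coneD_last] at h
    have h' := biprod.inr ≫= (eqToHom (coneX_succ S T (by omega)).symm ≫= h) =≫
      eqToHom (coneX_last S T)
    simpa using h'
  · rw [coneD_succ hi, coneD_succ hlt] at h
    have h' := biprod.inr ≫= (eqToHom (coneX_succ S T (by omega)).symm ≫= h) =≫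
      (eqToHom (coneX_succ S T hlt) ≫ biprod.snd)
    simpa using h'

end Cone

/-- A right `n`-exact sequence whose first differential is isomorphic to that of a member of an
`n`-exact structure is a member itself. -/
lemma IsNExactStructure.mem_of_rightNExact {n : ℕ} {𝒳 : Set (NSeq M)}
    (h𝒳 : IsNExactStructure n 𝒳) {Z S : NSeq M} (hZ : Z ∈ 𝒳)
    (hS : RightNExact n S) (e0 : S.X 0 ≅ Z.X 0) (e1 : S.X 1 ≅ Z.X 1)
    (hd : S.d 0 ≫ e1.hom = e0.hom ≫ Z.d 0) : S ∈ 𝒳 := by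
  obtain ⟨hZc, hZl, hZr⟩ := h𝒳.nExact Z hZ
  have hSc : S.IsComplex n := fun i hi => hS.d_comp_d (by omega)
  obtain ⟨f, hf0, hf1, hf⟩ := exists_chainMap S.X Z.X S.d Z.d (n + 1)
    (fun i hi => hZc i (by omega)) (fun i hi α hα => hS.exists_desc (by omega) α hα)
    e0.hom e1.hom hd
  obtain ⟨g, hg0, hg1, hg⟩ := exists_chainMap Z.X S.X Z.d S.d (n + 1)
    (fun i hi => hSc i (by omega)) (fun i hi α hα => hZr.exists_desc (by omega) α hα)
    e0.inv e1.inv (by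
      rw [Iso.eq_inv_comp, ← Category.assoc, ← hd, Category.assoc, Iso.hom_inv_id,
        Category.comp_id])
  obtain ⟨h, hh0, hh⟩ := exists_homotopy S.X S.X S.d S.d n (fun i hi => hSc i hi)
    (fun i hi α hα => hS.exists_desc (by omega) α hα) (fun i => 𝟙 _ - f i ≫ g i)
    (fun i hi => by
      simp only [Preadditive.comp_sub, Preadditive.sub_comp, Category.comp_id, Category.id_comp,
        Category.assoc]
      rw [← Category.assoc, hf i (by omega), Category.assoc, hg i (by omega)])
    (by simp [hf0, hg0])
  have hSl : LeftNExact n S := by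
    refine ⟨fun W x y hxy => ?_, fun W i hi x => ⟨fun hx => ?_, ?_⟩⟩
    · have := hZl.1 W (a₁ := x ≫ e0.hom) (a₂ := y ≫ e0.hom) (by
        simpa [hd] using (show x ≫ S.d 0 = y ≫ S.d 0 from hxy) =≫ e1.hom)
      exact (cancel_mono e0.hom).1 this
    · change x ≫ S.d (i + 1) = 0 at hx
      obtain ⟨y, hy⟩ := hZl.exists_lift hi (x ≫ f (i + 1)) (by
        rw [Category.assoc, ← hf (i + 1) (by omega), reassoc_of% hx, zero_comp])
      refine ⟨y ≫ g i + x ≫ h i, ?_⟩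
      have := x ≫= hh i hi
      simp only [Preadditive.comp_sub, Preadditive.comp_add, reassoc_of% hx, zero_comp, add_zero,
        Category.comp_id] at this
      change (y ≫ g i + x ≫ h i) ≫ S.d i = x
      rw [Preadditive.add_comp, Category.assoc, Category.assoc, ← this, ← hg i (by omega),
        ← Category.assoc y, hy, Category.assoc]
      abel
    · rintro ⟨y, rfl⟩
      change (y ≫ S.d i) ≫ S.d (i + 1) = 0
      rw [Category.assoc, hSc i hi, comp_zero]
  exact h𝒳.weakIsoClosed Z hZ S ⟨hSc, hSl, hS⟩ (Or.inr ⟨f, fun i hi => hf i (by omega),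
    Or.inl ⟨0, Nat.zero_le _, by rw [hf0]; infer_instance, by rw [hf1]; infer_instance⟩⟩)

/-- Pushing out an admissible `n`-exact sequence along a morphism from its first term yields an
admissible `n`-exact sequence with the same last term. -/
lemma IsNExactStructure.exists_pushout {n : ℕ} {𝒳 : Set (NSeq M)}
    (h𝒳 : IsNExactStructure n 𝒳) (hn : 1 ≤ n) {Z : NSeq M} (hZ : Z ∈ 𝒳) {W : M}
    (f₀ : Z.X 0 ⟶ W) :
    ∃ S ∈ 𝒳, ∃ (h0 : S.X 0 = W) (htop : S.X (n + 1) = Z.X (n + 1)) (t : ∀ i, Z.X i ⟶ S.X i),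
      IsNSeqHom n Z S t ∧ t 0 = f₀ ≫ eqToHom h0.symm ∧ t (n + 1) = eqToHom htop.symm := by
  obtain ⟨m, rfl⟩ : ∃ m, n = m + 1 := ⟨n - 1, by omega⟩
  obtain ⟨T, f, rfl, hf0, hf, hp, Z', hZ', e0, e1, hd⟩ := h𝒳.pushout Z hZ W f₀
  obtain ⟨hZc, -, hZr⟩ := h𝒳.nExact Z hZ
  obtain ⟨q, hq, hq'⟩ := hp.exists_desc_last (Z.d (m + 1)) 0
    (by rw [hZc m le_rfl, comp_zero]) (by simp)
  obtain ⟨F, τ, θ, θ', hF0, hFtop, hθ, hτ, hτN, hθ0⟩ := exists_splice T.X T.d (m + 1) q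
  have hθ₁ : ∀ i, i ≤ m + 1 → ∀ {V : M} (x : F i ⟶ V), θ i ≫ θ' i ≫ x = x := fun i hi V x => by
    rw [← Category.assoc, (hθ i hi).1, Category.id_comp]
  have hθ₂ : ∀ i, i ≤ m + 1 → ∀ {V : M} (x : T.X i ⟶ V), θ' i ≫ θ i ≫ x = x := fun i hi V x => by
    rw [← Category.assoc, (hθ i hi).2, Category.id_comp]
  have hτc : ∀ i, i < m + 1 → τ i ≫ τ (i + 1) = 0 := fun i hi => by
    rcases Nat.lt_or_ge i m with hlt | hge
    · rw [hτ i hi, hτ (i + 1) (by omega), Category.assoc, Category.assoc, hθ₂ _ (by omega),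
        ← Category.assoc (T.d i), hp.d_comp_d hlt, zero_comp, comp_zero]
    · obtain rfl : i = m := by omega
      rw [hτ i hi, hτN, Category.assoc, Category.assoc, hθ₂ _ (by omega),
        ← Category.assoc (T.d i), hq', zero_comp, comp_zero]
  have hS : RightNExact (m + 1) (⟨F, τ⟩ : NSeq M) := by
    refine ⟨fun V x y hxy => ?_, fun V i hi b => ⟨fun hb => ?_, ?_⟩⟩
    · change τ (m + 1) ≫ x = τ (m + 1) ≫ y at hxy
      rw [hτN] at hxy
      have h₁ := hZr.1 V (a₁ := eqToHom hFtop.symm ≫ x) (a₂ := eqToHom hFtop.symm ≫ y) (by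
        have := (f (m + 1) ≫ θ' (m + 1)) ≫= hxy
        simp only [Category.assoc, hθ₂ _ le_rfl] at this
        simpa only [← hq, Category.assoc] using this)
      exact (cancel_epi _).1 h₁
    · change F (i + 1) ⟶ V at b
      change τ i ≫ b = 0 at hb
      have hb' : T.d i ≫ θ' (i + 1) ≫ b = 0 := by
        have := θ' i ≫= hb
        rwa [hτ i hi, Category.assoc, Category.assoc, hθ₂ _ (by omega), comp_zero] at this
      obtain ⟨a, ha⟩ := hZr.exists_desc hi (f (i + 1) ≫ θ' (i + 1) ≫ b) (by
        rw [← Category.assoc, hf i (by omega), Category.assoc, hb', comp_zero])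
      rcases Nat.lt_or_ge i m with hlt | hge
      · obtain ⟨g, hg⟩ := hp.exists_desc hlt a (θ' (i + 1) ≫ b) ha (by
          rintro j hj
          obtain rfl : j = i := by omega
          simpa using hb')
        refine ⟨θ (i + 2) ≫ g, ?_⟩
        change τ (i + 1) ≫ θ (i + 2) ≫ g = b
        rw [hτ (i + 1) (by omega), Category.assoc, Category.assoc, hθ₂ _ (by omega), hg,
          hθ₁ _ (by omega)]
      · obtain rfl : i = m := by omega
        refine ⟨eqToHom hFtop ≫ a, ?_⟩
        change τ (i + 1) ≫ eqToHom hFtop ≫ a = b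
        have h₀ := hp.eq_zero (θ' (i + 1) ≫ b - q ≫ a)
          (by rw [Preadditive.comp_sub, ← Category.assoc (f (i + 1)) q, hq, ha, sub_self])
          (by rw [Preadditive.comp_sub, hb', ← Category.assoc, hq', zero_comp, sub_zero])
        rw [hτN, Category.assoc, Category.assoc, eqToHom_trans_assoc, eqToHom_refl,
          Category.id_comp, ← sub_eq_zero.1 h₀, hθ₁ _ le_rfl]
    · rintro ⟨c, rfl⟩
      change τ i ≫ τ (i + 1) ≫ c = 0
      rw [← Category.assoc, hτc i hi, zero_comp]
  have hθ0' : θ' 0 = eqToHom hF0.symm := by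
    have := (hθ 0 (by omega)).1
    rw [hθ0] at this
    simpa using eqToHom hF0.symm ≫= this
  let t : ∀ i, Z.X i ⟶ F i :=
    Function.update (fun i => f i ≫ θ' i) (m + 2) (eqToHom hFtop.symm)
  have ht : ∀ i, i ≤ m + 1 → t i = f i ≫ θ' i := fun i hi => Function.update_of_ne (by omega) _ _
  have htop : t (m + 2) = eqToHom hFtop.symm := Function.update_self _ _ _
  refine ⟨⟨F, τ⟩, h𝒳.mem_of_rightNExact hZ' hS
    (⟨θ 0, θ' 0, (hθ 0 (by omega)).1, (hθ 0 (by omega)).2⟩ ≪≫ eqToIso e0.symm)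
    (⟨θ 1, θ' 1, (hθ 1 (by omega)).1, (hθ 1 (by omega)).2⟩ ≪≫ eqToIso e1.symm) ?_, hF0, hFtop,
    t, fun i hi => ?_, ?_, ?_⟩
  · change τ 0 ≫ θ 1 ≫ eqToHom e1.symm = (θ 0 ≫ eqToHom e0.symm) ≫ Z'.d 0
    rw [hτ 0 (by omega), hd]
    simp only [Category.assoc, hθ₂ _ (show 0 + 1 ≤ m + 1 by omega), eqToHom_trans_assoc,
      eqToHom_refl, Category.id_comp]
  · change Z.d i ≫ t (i + 1) = t i ≫ τ i
    rw [ht i hi]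
    rcases Nat.lt_or_ge i (m + 1) with hlt | hge
    · rw [ht (i + 1) (by omega), hτ i hlt, Category.assoc, hθ₂ _ (by omega),
        ← Category.assoc, hf i (by omega), Category.assoc]
    · obtain rfl : i = m + 1 := by omega
      rw [htop, hτN, Category.assoc, hθ₂ _ (by omega), ← Category.assoc, hq]
  · rw [ht 0 (by omega), hf0, hθ0']
    simp
  · exact htop

/-! ### The topology generated by admissible epimorphisms -/

lemma AdmEpi.of_mem {n : ℕ} {𝒳 : Set (NSeq M)} {Z : NSeq M} (hZ : Z ∈ 𝒳) :
    AdmEpi n 𝒳 (Z.d n) :=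
  ⟨Z, hZ, rfl, rfl, by simp⟩

lemma IsNExactStructure.exists_pullback {n : ℕ} {𝒳 : Set (NSeq M)}
    (h𝒳 : IsNExactStructure n 𝒳) (hn : 1 ≤ n) {V X W : M} {g : V ⟶ X} (hg : AdmEpi n 𝒳 g)
    (w : W ⟶ X) : ∃ (U : M) (p : U ⟶ W) (q : U ⟶ V), AdmEpi n 𝒳 p ∧ p ≫ w = q ≫ g := by
  obtain ⟨m, rfl⟩ : ∃ m, n = m + 1 := ⟨n - 1, by omega⟩
  obtain ⟨Z, hZ, rfl, rfl, hd⟩ := hg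
  obtain rfl : Z.d (m + 1) = g := by simpa using hd
  obtain ⟨T, f, rfl, hf, hcomm, -, hepi⟩ := h𝒳.pullback Z hZ W w
  refine ⟨_, T.d m, f m, hepi, ?_⟩
  rw [← hcomm m le_rfl, hf]
  simp

lemma IsNExactStructure.exists_admEpi {n : ℕ} {𝒳 : Set (NSeq M)}
    (h𝒳 : IsNExactStructure n 𝒳) (hn : 1 ≤ n) (X : M) :
    ∃ (V : M) (g : V ⟶ X), AdmEpi n 𝒳 g := by
  obtain ⟨Z, hZ, -⟩ := h𝒳.zero_mem
  obtain ⟨U, p, -, hp, -⟩ := h𝒳.exists_pullback hn (AdmEpi.of_mem hZ) (0 : X ⟶ _)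
  exact ⟨U, p, hp⟩

/-- The Grothendieck topology whose covering sieves are those containing an admissible
epimorphism. -/
def admTopology {n : ℕ} {𝒳 : Set (NSeq M)} (h𝒳 : IsNExactStructure n 𝒳) (hn : 1 ≤ n) :
    GrothendieckTopology M where
  sieves X := {S | ∃ (V : M) (g : V ⟶ X), AdmEpi n 𝒳 g ∧ S g}
  top_mem' X := by
    obtain ⟨V, g, hg⟩ := h𝒳.exists_admEpi hn X
    exact ⟨V, g, hg, trivial⟩
  pullback_stable' X W S w := by
    rintro ⟨V, g, hg, hS⟩
    obtain ⟨U, p, q, hp, h⟩ := h𝒳.exists_pullback hn hg w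
    refine ⟨U, p, hp, ?_⟩
    rw [Sieve.pullback_apply, h]
    exact S.downward_closed hS q
  transitive' X S hS R hR := by
    obtain ⟨V, g, hg, hSg⟩ := hS
    obtain ⟨U, p, hp, hRp⟩ := hR hSg
    exact ⟨U, p ≫ g, h𝒳.epiComp p g hp hg, hRp⟩

/-! ### The additive Yoneda lemma -/

section Yoneda

variable {F G : Mᵒᵖ ⥤ AddCommGrpCat.{u}}

/-- The morphism from a representable functor determined by an element of an additive functor. -/
def yonedaElt [F.Additive] {X : M} (x : F.obj (op X)) : preadditiveYoneda.obj X ⟶ F where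
  app W := AddCommGrpCat.ofHom
    { toFun := fun f : W.unop ⟶ X => F.map f.op x
      map_zero' := by
        change F.map (0 : W.unop ⟶ X).op x = 0
        rw [op_zero, F.map_zero]
        rfl
      map_add' := fun (f g : W.unop ⟶ X) => by
        change F.map (f + g).op x = _
        rw [op_add, F.map_add]
        rfl }
  naturality W W' w := by
    ext (f : W.unop ⟶ X)
    change F.map (w.unop ≫ f).op x = F.map w (F.map f.op x)
    rw [op_comp, F.map_comp]
    rfl

/-- The element determined by a morphism from a representable functor. -/
def toElt {X : M} (α : preadditiveYoneda.obj X ⟶ F) : F.obj (op X) := α.app (op X) (𝟙 X)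

lemma app_eq_map_toElt {X W : M} (α : preadditiveYoneda.obj X ⟶ F) (f : W ⟶ X) :
    α.app (op W) f = F.map f.op (toElt α) := by
  have := ConcreteCategory.congr_hom (α.naturality f.op) (𝟙 X)
  refine Eq.trans ?_ this
  change _ = α.app (op W) (f ≫ 𝟙 X)
  rw [Category.comp_id]

lemma toElt_injective {X : M} {α β : preadditiveYoneda.obj X ⟶ F} (h : toElt α = toElt β) :
    α = β := by
  ext W (f : W.unop ⟶ X)
  exact (app_eq_map_toElt α f).trans (h ▸ (app_eq_map_toElt β f).symm)

@[simp]
lemma toElt_yonedaElt [F.Additive] {X : M} (x : F.obj (op X)) : toElt (yonedaElt x) = x := by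
  change F.map (𝟙 (op X)) x = x
  simp

lemma toElt_comp {X : M} (α : preadditiveYoneda.obj X ⟶ F) (β : F ⟶ G) :
    toElt (α ≫ β) = β.app (op X) (toElt α) := rfl

lemma toElt_map_comp {X W : M} (f : W ⟶ X) (α : preadditiveYoneda.obj X ⟶ F) :
    toElt (preadditiveYoneda.map f ≫ α) = F.map f.op (toElt α) := by
  rw [← app_eq_map_toElt]
  change α.app (op W) (𝟙 W ≫ f) = _
  rw [Category.id_comp]

lemma toElt_zero {X : M} : toElt (0 : preadditiveYoneda.obj X ⟶ F) = 0 := rfl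

lemma map_comp_eq_zero_iff {X W : M} (f : W ⟶ X) (α : preadditiveYoneda.obj X ⟶ F) :
    preadditiveYoneda.map f ≫ α = 0 ↔ F.map f.op (toElt α) = 0 := by
  rw [← toElt_map_comp]
  exact ⟨fun h => by rw [h, toElt_zero], fun h => toElt_injective h⟩

end Yoneda

/-! ### Local exactness and injective objects -/

section LocExact

variable {n : ℕ} {𝒳 : Set (NSeq M)} {F G H I J : Mᵒᵖ ⥤ AddCommGrpCat.{u}}

/-- Exactness at `G`, up to restriction along admissible epimorphisms. -/
def LocExact (n : ℕ) (𝒳 : Set (NSeq M)) (a : F ⟶ G) (b : G ⟶ H) : Prop :=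
  ∀ (X : M) (x : G.obj (op X)), b.app (op X) x = 0 → ∃ (V : M) (g : V ⟶ X), AdmEpi n 𝒳 g ∧
    ∃ y : F.obj (op V), a.app (op V) y = G.map g.op x

/-- `I` is an additive functor into which morphisms extend along locally exact sequences of
additive functors. -/
def AddInjective (n : ℕ) (𝒳 : Set (NSeq M)) (I : Mᵒᵖ ⥤ AddCommGrpCat.{u}) : Prop :=
  I.Additive ∧ ∀ ⦃F G H : Mᵒᵖ ⥤ AddCommGrpCat.{u}⦄ (a : F ⟶ G) (b : G ⟶ H), H.Additive →
    LocExact n 𝒳 a b → ∀ α : G ⟶ I, a ≫ α = 0 → ∃ β : H ⟶ I, b ≫ β = α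

instance (X : M) : (preadditiveYoneda.obj X).Additive where
  map_add {W W'} f g := by
    ext (h : W.unop ⟶ X)
    exact Preadditive.add_comp _ _ _ f.unop g.unop h

instance : (preadditiveYoneda (C := M)).Additive where
  map_add {X Y} f g := by
    ext W (h : W.unop ⟶ X)
    exact Preadditive.comp_add _ _ _ h f g

/-- The additive functor `X ↦ Hom(H_X, J)` associated with a functor `J`. -/
abbrev additivization (J : Mᵒᵖ ⥤ AddCommGrpCat.{u}) : Mᵒᵖ ⥤ AddCommGrpCat.{u} :=
  preadditiveYoneda.op ⋙ preadditiveYoneda.obj J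

instance (J : Mᵒᵖ ⥤ AddCommGrpCat.{u}) : (additivization J).Additive where
  map_add {W W'} f g := by
    ext (h : preadditiveYoneda.obj W.unop ⟶ J)
    change preadditiveYoneda.map (f + g).unop ≫ h = preadditiveYoneda.map f.unop ≫ h +
      preadditiveYoneda.map g.unop ≫ h
    rw [unop_add, Functor.map_add, Preadditive.add_comp]

/-- The counit `additivization J ⟶ J`. -/
def additivizationCounit (J : Mᵒᵖ ⥤ AddCommGrpCat.{u}) : additivization J ⟶ J where
  app W := AddCommGrpCat.ofHom
    { toFun := fun φ : preadditiveYoneda.obj W.unop ⟶ J => toElt φ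
      map_zero' := rfl
      map_add' := fun _ _ => rfl }
  naturality W W' w := by
    ext (φ : preadditiveYoneda.obj W.unop ⟶ J)
    exact toElt_map_comp w.unop φ

lemma additivization_hom_ext {α β : G ⟶ additivization J}
    (h : α ≫ additivizationCounit J = β ≫ additivizationCounit J) : α = β := by
  ext W x
  exact toElt_injective (ConcreteCategory.congr_hom (NatTrans.congr_app h W) x)

/-- The lift of a morphism from an additive functor to the additivization. -/
def additivizationLift [G.Additive] (α : G ⟶ J) : G ⟶ additivization J where
  app W := AddCommGrpCat.ofHom
    { toFun := fun x => (yonedaElt (X := W.unop) x ≫ α : preadditiveYoneda.obj W.unop ⟶ J)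
      map_zero' := by
        refine toElt_injective ?_
        rw [toElt_comp, toElt_yonedaElt]
        exact map_zero _
      map_add' := fun x y => by
        refine toElt_injective ?_
        rw [toElt_comp, toElt_yonedaElt]
        refine (map_add (α.app W).hom x y).trans ?_
        change _ = toElt (yonedaElt (X := W.unop) x ≫ α) + toElt (yonedaElt (X := W.unop) y ≫ α)
        rw [toElt_comp, toElt_yonedaElt, toElt_comp, toElt_yonedaElt] }
  naturality W W' w := by
    ext x
    refine toElt_injective ?_
    change toElt (yonedaElt (X := W'.unop) (G.map w x) ≫ α) =
      toElt (preadditiveYoneda.map w.unop ≫ yonedaElt (X := W.unop) x ≫ α)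
    rw [toElt_map_comp, toElt_comp, toElt_comp, toElt_yonedaElt, toElt_yonedaElt]
    exact ConcreteCategory.congr_hom (α.naturality w) x

lemma additivizationLift_counit [G.Additive] (α : G ⟶ J) :
    additivizationLift α ≫ additivizationCounit J = α := by
  ext W x
  change toElt (yonedaElt (X := W.unop) x ≫ α) = _
  rw [toElt_comp, toElt_yonedaElt]

lemma addInjective_additivization [Injective J]
    (hJ : ∀ (X : M) (x : J.obj (op X)) (V : M) (g : V ⟶ X), AdmEpi n 𝒳 g →
      J.map g.op x = 0 → x = 0) : AddInjective n 𝒳 (additivization J) := by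
  refine ⟨inferInstance, fun F G H a b hH hab α hα => ?_⟩
  have hk : kernel.ι b ≫ α ≫ additivizationCounit J = 0 := by
    ext W x
    obtain ⟨V, g, hg, y, hy⟩ := hab W.unop ((kernel.ι b).app W x)
      (ConcreteCategory.congr_hom (NatTrans.congr_app (kernel.condition b) W) x)
    refine hJ W.unop _ V g hg ?_
    have h1 := ConcreteCategory.congr_hom ((α ≫ additivizationCounit J).naturality g.op)
      ((kernel.ι b).app W x)
    refine h1.symm.trans ?_
    change (α ≫ additivizationCounit J).app (op V) (G.map g.op ((kernel.ι b).app W x)) = 0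
    rw [← hy]
    have h2 : a ≫ α ≫ additivizationCounit J = 0 := by rw [← Category.assoc, hα, zero_comp]
    exact ConcreteCategory.congr_hom (NatTrans.congr_app h2 (op V)) y
  have hex : (ShortComplex.mk (kernel.ι b) b (kernel.condition b)).Exact :=
    ShortComplex.exact_kernel b
  refine ⟨additivizationLift (hex.descToInjective (α ≫ additivizationCounit J) hk),
    additivization_hom_ext ?_⟩
  rw [Category.assoc, additivizationLift_counit]
  exact hex.comp_descToInjective _ _

theorem IsNExactStructure.exists_addInjective (h𝒳 : IsNExactStructure n 𝒳) (hn : 1 ≤ n)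
    (f : F ⟶ G) [G.Additive] : ∃ (I : Mᵒᵖ ⥤ AddCommGrpCat.{u}) (v : G ⟶ I),
      AddInjective n 𝒳 I ∧ f ≫ v = 0 ∧ LocExact n 𝒳 f v := by
  let T := admTopology h𝒳 hn
  let Q := cokernel f
  let I₀ : Sheaf T AddCommGrpCat.{u} := Injective.under ((presheafToSheaf T _).obj Q)
  let ι : (presheafToSheaf T _).obj Q ⟶ I₀ := Injective.ι _
  let p : Q ⟶ I₀.obj := toSheafify T Q ≫ ι.hom
  have hinj : Injective I₀.obj :=
    Injective.injective_of_adjoint (sheafificationAdjunction T AddCommGrpCat.{u}) I₀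
  have hι : ∀ W, Function.Injective (ι.hom.app W) := by
    intro W
    have : Mono ((sheafToPresheaf T _).map ι) := inferInstance
    have : Mono (((sheafToPresheaf T _).map ι).app W) := inferInstance
    exact (AddCommGrpCat.mono_iff_injective _).1 this
  refine ⟨additivization I₀.obj, additivizationLift (cokernel.π f ≫ p),
    addInjective_additivization ?_, ?_, ?_⟩
  · intro X x V g hg hx
    have hsep := Presheaf.IsSheaf.isSeparated I₀.property
    refine hsep X (Sieve.generate (Presieve.singleton g)) ⟨V, g, hg, ?_⟩ x 0 ?_
    · exact ⟨V, 𝟙 V, g, ⟨⟩, by simp⟩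
    · rintro Y _ ⟨_, k, _, ⟨⟩, rfl⟩
      rw [op_comp, Functor.map_comp, map_zero]
      change I₀.obj.map k.op (I₀.obj.map g.op x) = 0
      rw [hx, map_zero]
  · refine additivization_hom_ext ?_
    rw [Category.assoc, additivizationLift_counit, cokernel.condition_assoc, zero_comp, zero_comp]
  · intro X x hx
    have h1 : (cokernel.π f ≫ p).app (op X) x = 0 := by
      rw [← additivizationLift_counit (cokernel.π f ≫ p)]
      change (additivizationCounit I₀.obj).app _
        ((additivizationLift (cokernel.π f ≫ p)).app _ x) = 0
      rw [hx, map_zero]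
    have h2 : (toSheafify T Q).app (op X) ((cokernel.π f).app (op X) x) =
        (toSheafify T Q).app (op X) 0 := by
      refine hι _ ?_
      rw [map_zero, map_zero]
      exact h1
    obtain ⟨V, g, hg, h3⟩ := Presheaf.equalizerSieve_mem T (toSheafify T Q) _ _ h2
    refine ⟨V, g, hg, ?_⟩
    have h4 : (cokernel.π f).app (op V) (G.map g.op x) = 0 := by
      have := ConcreteCategory.congr_hom ((cokernel.π f).naturality g.op) x
      refine this.trans ?_
      refine Eq.trans ?_ (map_zero (Q.map g.op).hom)
      exact h3
    have hex : (ShortComplex.mk f (cokernel.π f) (cokernel.condition f)).Exact :=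
      ShortComplex.exact_cokernel f
    have hex' := hex.map ((evaluation Mᵒᵖ AddCommGrpCat.{u}).obj (op V))
    rw [ShortComplex.ab_exact_iff] at hex'
    exact hex' _ h4

end LocExact

/-! ### Functors acyclic for admissible sequences -/

section Acyclic

variable {n : ℕ} {𝒳 : Set (NSeq M)} {F G K : Mᵒᵖ ⥤ AddCommGrpCat.{u}}

/-- `Hom(-, K)` is exact on the complexes of representable functors given by members of `𝒳`,
except possibly at the initial term. -/
def AcyclicOn (n : ℕ) (𝒳 : Set (NSeq M)) (K : Mᵒᵖ ⥤ AddCommGrpCat.{u}) : Prop :=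
  ∀ Z ∈ 𝒳, (∀ k, k + 1 ≤ n → ∀ y : preadditiveYoneda.obj (Z.X (k + 1)) ⟶ K,
      preadditiveYoneda.map (Z.d k) ≫ y = 0 →
      ∃ v : preadditiveYoneda.obj (Z.X (k + 2)) ⟶ K, preadditiveYoneda.map (Z.d (k + 1)) ≫ v = y) ∧
    ∀ x : preadditiveYoneda.obj (Z.X (n + 1)) ⟶ K, preadditiveYoneda.map (Z.d n) ≫ x = 0 → x = 0

lemma IsNExactStructure.locExact_map (h𝒳 : IsNExactStructure n 𝒳) (hn : 1 ≤ n) {Z : NSeq M}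
    (hZ : Z ∈ 𝒳) {k : ℕ} (hk : k + 1 ≤ n) :
    LocExact n 𝒳 (preadditiveYoneda.map (Z.d k)) (preadditiveYoneda.map (Z.d (k + 1))) := by
  intro X (f : X ⟶ Z.X (k + 1)) (hf : f ≫ Z.d (k + 1) = 0)
  obtain ⟨V, g, hg⟩ := h𝒳.exists_admEpi hn X
  obtain ⟨y, hy⟩ := (h𝒳.nExact Z hZ).2.1.exists_lift hk f hf
  refine ⟨V, g, hg, (g ≫ y : V ⟶ Z.X k), ?_⟩
  change (g ≫ y) ≫ Z.d k = g ≫ f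
  rw [Category.assoc, hy]

lemma IsNExactStructure.locExact_map_last (h𝒳 : IsNExactStructure n 𝒳) (hn : 1 ≤ n) {Z : NSeq M}
    (hZ : Z ∈ 𝒳) (β : preadditiveYoneda.obj (Z.X (n + 1)) ⟶ K) :
    LocExact n 𝒳 (preadditiveYoneda.map (Z.d n)) β := by
  intro X (f : X ⟶ Z.X (n + 1)) _
  obtain ⟨U, p, q, hp, h⟩ := h𝒳.exists_pullback hn (AdmEpi.of_mem hZ) f
  exact ⟨U, p, hp, q, h.symm⟩

lemma IsNExactStructure.eq_zero_of_map_first (h𝒳 : IsNExactStructure n 𝒳) {Z : NSeq M}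
    (hZ : Z ∈ 𝒳) {X : M} {f : X ⟶ Z.X 0} (hf : f ≫ Z.d 0 = 0) : f = 0 :=
  (h𝒳.nExact Z hZ).2.1.1 X (hf.trans zero_comp.symm)

lemma AddInjective.acyclicOn (h𝒳 : IsNExactStructure n 𝒳) (hn : 1 ≤ n)
    (hK : AddInjective n 𝒳 K) : AcyclicOn n 𝒳 K := by
  refine fun Z hZ => ⟨fun k hk y hy => ?_, fun x hx => ?_⟩
  · exact hK.2 _ _ inferInstance (h𝒳.locExact_map hn hZ hk) y hy
  · obtain ⟨β, hβ⟩ := hK.2 _ (0 : _ ⟶ preadditiveYoneda.obj (Z.X (n + 1))) inferInstance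
      (h𝒳.locExact_map_last hn hZ _) x hx
    rw [← hβ, zero_comp]

lemma acyclicOn_yoneda (h𝒳 : IsNExactStructure n 𝒳) (A : M) :
    AcyclicOn n 𝒳 (preadditiveYoneda.obj A) := by
  refine fun Z hZ => ⟨fun k hk y hy => ?_, fun x hx => ?_⟩
  · obtain ⟨y, rfl⟩ := preadditiveYoneda.map_surjective y
    rw [← Functor.map_comp, Functor.map_eq_zero_iff] at hy
    obtain ⟨v, rfl⟩ := (h𝒳.nExact Z hZ).2.2.exists_desc hk y hy
    exact ⟨preadditiveYoneda.map v, by rw [Functor.map_comp]⟩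
  · obtain ⟨x, rfl⟩ := preadditiveYoneda.map_surjective x
    rw [← Functor.map_comp, Functor.map_eq_zero_iff] at hx
    rw [(h𝒳.nExact Z hZ).2.2.eq_zero x hx, Functor.map_zero]

lemma AcyclicOn.eq_zero (hK : AcyclicOn n 𝒳 K) {V C : M} {g : V ⟶ C} (hg : AdmEpi n 𝒳 g)
    {x : preadditiveYoneda.obj C ⟶ K} (hx : preadditiveYoneda.map g ≫ x = 0) : x = 0 := by
  obtain ⟨Z, hZ, rfl, rfl, hd⟩ := hg
  obtain rfl : Z.d n = g := by simpa using hd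
  exact (hK Z hZ).2 x hx

end Acyclic

/-! ### Injective resolutions -/

/-- A locally exact resolution of `H_A` by functors injective with respect to locally exact
sequences of additive functors. -/
structure Resolution (n : ℕ) (𝒳 : Set (NSeq M)) (A : M) where
  G : ℕ → (Mᵒᵖ ⥤ AddCommGrpCat.{u})
  D : ∀ i, G i ⟶ G (i + 1)
  hG0 : G 0 = preadditiveYoneda.obj A
  inj : ∀ i, AddInjective n 𝒳 (G (i + 1))
  comp : ∀ i, D i ≫ D (i + 1) = 0
  exact_zero : LocExact n 𝒳 (0 : G 0 ⟶ G 0) (D 0)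
  exact : ∀ i, LocExact n 𝒳 (D i) (D (i + 1))

/-- A morphism in `Mod(M)` with additive target. -/
structure AddArrow (M : Type u) [SmallCategory M] [Preadditive M] where
  F : Mᵒᵖ ⥤ AddCommGrpCat.{u}
  G : Mᵒᵖ ⥤ AddCommGrpCat.{u}
  f : F ⟶ G
  additive : G.Additive

lemma IsNExactStructure.nonempty_resolution {n : ℕ} {𝒳 : Set (NSeq M)}
    (h𝒳 : IsNExactStructure n 𝒳) (hn : 1 ≤ n) (A : M) : Nonempty (Resolution n 𝒳 A) := by
  have step (a : AddArrow M) : ∃ (I : Mᵒᵖ ⥤ AddCommGrpCat.{u}) (v : a.G ⟶ I),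
      AddInjective n 𝒳 I ∧ a.f ≫ v = 0 ∧ LocExact n 𝒳 a.f v :=
    have := a.additive
    h𝒳.exists_addInjective hn a.f
  choose I v hI h0 hex using step
  let s : ℕ → AddArrow M := fun i => Nat.rec
    ⟨preadditiveYoneda.obj A, preadditiveYoneda.obj A, 0, inferInstance⟩
    (fun _ a => ⟨a.G, I a, v a, (hI a).1⟩) i
  exact ⟨⟨fun i => (s i).G, fun i => v (s i), rfl, fun i => hI (s i), fun i => h0 (s (i + 1)),
    hex (s 0), fun i => hex (s (i + 1))⟩⟩

namespace Resolution

variable {n : ℕ} {𝒳 : Set (NSeq M)} {A : M} (R : Resolution n 𝒳 A)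

lemma additive (i : ℕ) : (R.G i).Additive := by
  cases i with
  | zero => rw [R.hG0]; infer_instance
  | succ i => exact (R.inj i).1

lemma acyclicOn (h𝒳 : IsNExactStructure n 𝒳) (hn : 1 ≤ n) (i : ℕ) : AcyclicOn n 𝒳 (R.G i) := by
  cases i with
  | zero => rw [R.hG0]; exact acyclicOn_yoneda h𝒳 A
  | succ i => exact (R.inj i).acyclicOn h𝒳 hn

lemma eq_zero (h𝒳 : IsNExactStructure n 𝒳) (hn : 1 ≤ n) {C : M}
    {x : preadditiveYoneda.obj C ⟶ R.G 0} (hx : x ≫ R.D 0 = 0) : x = 0 := by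
  obtain ⟨V, g, hg, y, hy⟩ := R.exact_zero C (toElt x) (by rw [← toElt_comp, hx, toElt_zero])
  refine (R.acyclicOn h𝒳 hn 0).eq_zero hg ?_
  rw [map_comp_eq_zero_iff, ← hy]
  rfl

/-- Every `x : H_C ⟶ G (i + 1)` killed by `D` locally factors through `D`. -/
lemma exists_local_lift {i : ℕ} {C : M} {x : preadditiveYoneda.obj C ⟶ R.G (i + 1)}
    (hx : x ≫ R.D (i + 1) = 0) : ∃ (V : M) (g : V ⟶ C), AdmEpi n 𝒳 g ∧
      ∃ y : preadditiveYoneda.obj V ⟶ R.G i, y ≫ R.D i = preadditiveYoneda.map g ≫ x := by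
  have := R.additive i
  obtain ⟨V, g, hg, y, hy⟩ := R.exact i C (toElt x) (by rw [← toElt_comp, hx, toElt_zero])
  refine ⟨V, g, hg, yonedaElt y, toElt_injective ?_⟩
  rw [toElt_comp, toElt_yonedaElt, toElt_map_comp, hy]

lemma exists_factor_of_exact (h𝒳 : IsNExactStructure n 𝒳) (hn : 1 ≤ n) (j : ℕ)
    (hP : ∀ q < j, ∀ (C : M) (x : preadditiveYoneda.obj C ⟶ R.G (q + 1)), x ≫ R.D (q + 1) = 0 →
      ∃ y : preadditiveYoneda.obj C ⟶ R.G q, y ≫ R.D q = x)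
    {Z : NSeq M} (hZ : Z ∈ 𝒳) {k : ℕ} (hjk : j ≤ k) (hk : k + 1 ≤ n)
    (y : preadditiveYoneda.obj (Z.X (k + 1)) ⟶ R.G j)
    (hy : preadditiveYoneda.map (Z.d k) ≫ y ≫ R.D j = 0) :
    ∃ v : preadditiveYoneda.obj (Z.X (k + 2)) ⟶ R.G j,
      y ≫ R.D j = preadditiveYoneda.map (Z.d (k + 1)) ≫ v ≫ R.D j := by
  induction j generalizing k with
  | zero =>
    obtain ⟨v, rfl⟩ := ((R.acyclicOn h𝒳 hn 0) Z hZ).1 k hk y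
      (R.eq_zero h𝒳 hn (by rw [Category.assoc, hy]))
    exact ⟨v, by rw [Category.assoc]⟩
  | succ j ih =>
    obtain ⟨k, rfl⟩ : ∃ l, k = l + 1 := ⟨k - 1, by omega⟩
    obtain ⟨y', hy'⟩ := hP j (by omega) _ (preadditiveYoneda.map (Z.d (k + 1)) ≫ y)
      (by rw [Category.assoc, hy])
    obtain ⟨v', hv'⟩ := ih (fun q hq => hP q (by omega)) (k := k) (by omega) (by omega) y' (by
      rw [hy', ← Category.assoc, ← Functor.map_comp, (h𝒳.nExact Z hZ).1 k (by omega),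
        Functor.map_zero, zero_comp])
    obtain ⟨v, hv⟩ := ((R.acyclicOn h𝒳 hn (j + 1)) Z hZ).1 (k + 1) hk (y - v' ≫ R.D j) (by
      rw [Preadditive.comp_sub, ← hy', hv', sub_self])
    refine ⟨v, ?_⟩
    rw [← Category.assoc, hv, Preadditive.sub_comp, Category.assoc, R.comp, comp_zero, sub_zero]

theorem exists_lift (h𝒳 : IsNExactStructure n 𝒳) (hn : 1 ≤ n) (q : ℕ) (hq : q + 1 ≤ n) (C : M)
    (x : preadditiveYoneda.obj C ⟶ R.G (q + 1)) (hx : x ≫ R.D (q + 1) = 0) :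
    ∃ y : preadditiveYoneda.obj C ⟶ R.G q, y ≫ R.D q = x := by
  induction q using Nat.strong_induction_on generalizing C with
  | _ q ih =>
    obtain ⟨m, rfl⟩ : ∃ m, n = m + 1 := ⟨n - 1, by omega⟩
    obtain ⟨V, g, hg, y, hy⟩ := R.exists_local_lift hx
    obtain ⟨Z, hZ, rfl, rfl, hd⟩ := hg
    obtain rfl : Z.d (m + 1) = g := by simpa using hd
    obtain ⟨v, hv⟩ := R.exists_factor_of_exact h𝒳 hn q
      (fun r hr C x hx => ih r hr (by omega) C x hx) hZ (k := m) (by omega) le_rfl y (by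
        rw [hy, ← Category.assoc, ← Functor.map_comp, (h𝒳.nExact Z hZ).1 m le_rfl,
          Functor.map_zero, zero_comp])
    refine ⟨v, ?_⟩
    rw [← sub_eq_zero]
    refine ((R.acyclicOn h𝒳 hn (q + 1)) Z hZ).2 _ ?_
    rw [Preadditive.comp_sub, ← hv, hy, sub_self]

end Resolution

/-! ### Pulling back a resolution along a morphism from a representable functor -/

lemma exists_splice_pair {C : Type*} [Category C] [Preadditive C] (G : ℕ → C)
    (D : ∀ i, G i ⟶ G (i + 1)) (m : ℕ) {P Q : C} (p : G m ⟶ P) (q : P ⟶ Q) :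
    ∃ (F : ℕ → C) (τ : ∀ i, F i ⟶ F (i + 1)) (θ : ∀ i, i ≤ m → (F i ≅ G i)) (κ : F (m + 1) ≅ P)
      (h0 : F 0 = G 0) (hQ : F (m + 2) = Q),
      (∀ i (hi : i < m), τ i ≫ (θ (i + 1) hi).hom = (θ i hi.le).hom ≫ D i) ∧
      τ m ≫ κ.hom = (θ m le_rfl).hom ≫ p ∧ τ (m + 1) ≫ eqToHom hQ = κ.hom ≫ q ∧
      (θ 0 (Nat.zero_le m)).hom = eqToHom h0 := by
  obtain ⟨F₁, τ₁, θ₁, θ₁', h₁, hP, hθ₁, hτ₁, hτP, hθ₁0⟩ := exists_splice G D m p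
  obtain ⟨F, τ, θ, θ', h0, hQ, hθ, hτ, hτQ, hθ0⟩ :=
    exists_splice F₁ τ₁ (m + 1) (eqToHom hP ≫ q)
  refine ⟨F, τ, fun i hi => ⟨θ i ≫ θ₁ i, θ₁' i ≫ θ' i, ?_, ?_⟩,
    ⟨θ (m + 1) ≫ eqToHom hP, eqToHom hP.symm ≫ θ' (m + 1), ?_, ?_⟩, h0.trans h₁, hQ,
    fun i hi => ?_, ?_, ?_, ?_⟩
  · rw [Category.assoc, reassoc_of% (hθ₁ i hi).1, (hθ i (by omega)).1]
  · rw [Category.assoc, reassoc_of% (hθ i (by omega)).2, (hθ₁ i hi).2]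
  · simp [(hθ (m + 1) le_rfl).1]
  · rw [Category.assoc, reassoc_of% (hθ (m + 1) le_rfl).2]
    simp
  · dsimp only
    rw [hτ i (by omega), hτ₁ i hi]
    simp only [Category.assoc]
    rw [reassoc_of% (hθ (i + 1) (by omega)).2, (hθ₁ (i + 1) hi).2, Category.comp_id]
  · dsimp only
    rw [hτ m (by omega), hτP]
    simp only [Category.assoc]
    rw [reassoc_of% (hθ (m + 1) le_rfl).2]
    simp
  · dsimp only
    rw [hτQ]
    simp
  · dsimp only
    rw [hθ0, hθ₁0, eqToHom_trans]

section SheafOn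

variable {n : ℕ} {𝒳 : Set (NSeq M)} {F F' G G' H H' K K' : Mᵒᵖ ⥤ AddCommGrpCat.{u}}

/-- `Hom(-, K)` is left exact on the end terms of the complexes of representable functors given
by members of `𝒳`. -/
def SheafOn (n : ℕ) (𝒳 : Set (NSeq M)) (K : Mᵒᵖ ⥤ AddCommGrpCat.{u}) : Prop :=
  ∀ Z ∈ 𝒳, (∀ k, k + 1 = n → ∀ y : preadditiveYoneda.obj (Z.X (k + 1)) ⟶ K,
      preadditiveYoneda.map (Z.d k) ≫ y = 0 →
      ∃ v : preadditiveYoneda.obj (Z.X (k + 2)) ⟶ K, preadditiveYoneda.map (Z.d (k + 1)) ≫ v = y) ∧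
    ∀ x : preadditiveYoneda.obj (Z.X (n + 1)) ⟶ K, preadditiveYoneda.map (Z.d n) ≫ x = 0 → x = 0

lemma AcyclicOn.sheafOn (hK : AcyclicOn n 𝒳 K) : SheafOn n 𝒳 K :=
  fun Z hZ => ⟨fun k hk => (hK Z hZ).1 k hk.le, (hK Z hZ).2⟩

lemma SheafOn.effClosed (h𝒳 : IsNExactStructure n 𝒳) (hK : SheafOn n 𝒳 K) [K.Additive] :
    EffClosed n 𝒳 K := by
  intro Z hZ j hj
  constructor
  · refine (injective_iff_map_eq_zero (K.map (Z.d n).op).hom).2 fun x hx => ?_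
    have h := (hK Z hZ).2 (yonedaElt x) (by
      rw [map_comp_eq_zero_iff, toElt_yonedaElt]
      exact hx)
    rw [← toElt_yonedaElt x, h, toElt_zero]
  · intro x
    constructor
    · intro hx
      obtain ⟨v, hv⟩ := (hK Z hZ).1 j hj (yonedaElt x) (by
        rw [map_comp_eq_zero_iff, toElt_yonedaElt]
        exact hx)
      refine ⟨toElt v, ?_⟩
      have := congrArg toElt hv
      rwa [toElt_map_comp, toElt_yonedaElt] at this
    · rintro ⟨v, rfl⟩
      have h : K.map (Z.d (j + 1)).op ≫ K.map (Z.d j).op = 0 := by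
        rw [← K.map_comp, ← op_comp, (h𝒳.nExact Z hZ).1 j hj.le, op_zero, K.map_zero]
      exact ConcreteCategory.congr_hom h v

lemma SheafOn.of_iso (hK : SheafOn n 𝒳 K) (e : K' ≅ K) : SheafOn n 𝒳 K' := by
  refine fun Z hZ => ⟨fun k hk y hy => ?_, fun x hx => ?_⟩
  · obtain ⟨v, hv⟩ := (hK Z hZ).1 k hk (y ≫ e.hom) (by rw [reassoc_of% hy, zero_comp])
    refine ⟨v ≫ e.inv, ?_⟩
    rw [reassoc_of% hv, e.hom_inv_id, Category.comp_id]
  · have := (hK Z hZ).2 (x ≫ e.hom) (by rw [reassoc_of% hx, zero_comp])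
    rw [← cancel_mono e.hom, this, zero_comp]

lemma SheafOn.pullback (hF : SheafOn n 𝒳 F) (hG : SheafOn n 𝒳 G) (hH : SheafOn n 𝒳 H)
    (f : F ⟶ H) (g : G ⟶ H) : SheafOn n 𝒳 (pullback f g) := by
  refine fun Z hZ => ⟨fun k hk y hy => ?_, fun x hx => ?_⟩
  · obtain ⟨v, hv⟩ := (hF Z hZ).1 k hk (y ≫ pullback.fst f g) (by rw [reassoc_of% hy, zero_comp])
    obtain ⟨w, hw⟩ := (hG Z hZ).1 k hk (y ≫ pullback.snd f g) (by rw [reassoc_of% hy, zero_comp])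
    subst hk
    have h := (hH Z hZ).2 (v ≫ f - w ≫ g) (by
      rw [Preadditive.comp_sub, reassoc_of% hv, reassoc_of% hw, pullback.condition, sub_self])
    refine ⟨pullback.lift v w (sub_eq_zero.1 h), ?_⟩
    ext1
    · exact (Category.assoc _ _ _).trans ((congrArg _ (pullback.lift_fst _ _ _)).trans hv)
    · exact (Category.assoc _ _ _).trans ((congrArg _ (pullback.lift_snd _ _ _)).trans hw)
  · ext1
    · rw [(hF Z hZ).2 (x ≫ pullback.fst f g) (by rw [reassoc_of% hx, zero_comp]), zero_comp]
    · rw [(hG Z hZ).2 (x ≫ pullback.snd f g) (by rw [reassoc_of% hx, zero_comp]), zero_comp]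

lemma pullback_obj_ext {f : F ⟶ H} {g : G ⟶ H} {W : Mᵒᵖ} {T : AddCommGrpCat.{u}}
    {a b : T ⟶ (pullback f g).obj W}
    (h₁ : a ≫ (pullback.fst f g).app W = b ≫ (pullback.fst f g).app W)
    (h₂ : a ≫ (pullback.snd f g).app W = b ≫ (pullback.snd f g).app W) : a = b :=
  ((IsPullback.of_hasPullback f g).map ((evaluation _ _).obj W)).hom_ext h₁ h₂

instance additive_pullback [F.Additive] [G.Additive] (f : F ⟶ H) (g : G ⟶ H) :
    (pullback f g).Additive where
  map_add {W W'} a b := by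
    refine pullback_obj_ext ?_ ?_ <;>
    simp only [NatTrans.naturality, Preadditive.add_comp, Functor.map_add, Preadditive.comp_add]

lemma toElt_pullback_ext [F.Additive] [G.Additive] {f : F ⟶ H} {g : G ⟶ H} {W : M}
    {x y : (pullback f g).obj (op W)}
    (h₁ : (pullback.fst f g).app (op W) x = (pullback.fst f g).app (op W) y)
    (h₂ : (pullback.snd f g).app (op W) x = (pullback.snd f g).app (op W) y) : x = y := by
  rw [← toElt_yonedaElt x, ← toElt_yonedaElt y]
  congr 1
  ext1 <;> refine toElt_injective ?_ <;> rw [toElt_comp, toElt_comp, toElt_yonedaElt,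
    toElt_yonedaElt] <;> assumption

lemma exists_pullback_elt [F.Additive] [G.Additive] {f : F ⟶ H} {g : G ⟶ H} {W : M}
    (x : F.obj (op W)) (y : G.obj (op W)) (h : f.app (op W) x = g.app (op W) y) :
    ∃ z : (pullback f g).obj (op W), (pullback.fst f g).app (op W) z = x ∧
      (pullback.snd f g).app (op W) z = y := by
  refine ⟨toElt (pullback.lift (yonedaElt x) (yonedaElt y) (toElt_injective ?_)), ?_, ?_⟩
  · rwa [toElt_comp, toElt_comp, toElt_yonedaElt, toElt_yonedaElt]
  · rw [← toElt_comp, pullback.lift_fst, toElt_yonedaElt]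
  · rw [← toElt_comp, pullback.lift_snd, toElt_yonedaElt]

lemma LocExact.of_retract {a : F ⟶ G} {b : G ⟶ H} {a' : F' ⟶ G'} {b' : G' ⟶ H'}
    (h : LocExact n 𝒳 a b) (φ : F ⟶ F') (i : G' ⟶ G) (r : G ⟶ G') (ψ : H' ⟶ H)
    (hir : i ≫ r = 𝟙 G') (ha : φ ≫ a' = a ≫ r) (hb : b' ≫ ψ = i ≫ b) :
    LocExact n 𝒳 a' b' := by
  intro X x hx
  obtain ⟨V, g, hg, y, hy⟩ := h X (i.app (op X) x) (by
    refine (ConcreteCategory.congr_hom (NatTrans.congr_app hb (op X)) x).symm.trans ?_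
    refine (congrArg (ψ.app (op X)) hx).trans (map_zero _))
  refine ⟨V, g, hg, φ.app (op V) y, ?_⟩
  refine (ConcreteCategory.congr_hom (NatTrans.congr_app ha (op V)) y).trans ?_
  refine (congrArg (r.app (op V)) hy).trans ?_
  refine (ConcreteCategory.congr_hom (r.naturality g.op) (i.app (op X) x)).trans ?_
  exact congrArg (G'.map g.op) (ConcreteCategory.congr_hom (NatTrans.congr_app hir (op X)) x)

lemma RepSeq.homologyWeaklyEffaceable_iff {A B : M} (S : RepSeq M n A B) :
    S.HomologyWeaklyEffaceable 𝒳 ↔ LocExact n 𝒳 (0 : S.F 0 ⟶ S.F 0) (S.τ 0) ∧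
      (∀ i, i + 1 ≤ n → LocExact n 𝒳 (S.τ i) (S.τ (i + 1))) ∧
      LocExact n 𝒳 (S.τ n) (0 : S.F (n + 1) ⟶ S.F (n + 1)) := by
  refine and_congr ?_ (and_congr Iff.rfl ?_)
  · refine forall₃_congr fun X x hx => exists₂_congr fun V g => and_congr Iff.rfl ?_
    exact ⟨fun h => ⟨0, h.symm⟩, fun ⟨y, hy⟩ => hy.symm⟩
  · exact ⟨fun h X x _ => h X x, fun h X x => h X x rfl⟩

end SheafOn

namespace Resolution

variable {m : ℕ} {𝒳 : Set (NSeq M)} {A B : M} (R : Resolution (m + 1) 𝒳 A)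
  (z : preadditiveYoneda.obj B ⟶ R.G (m + 2))

/-- The morphism into the pullback of `D` along `z` preceding the projection to `H_B`. -/
noncomputable def toPullback : R.G m ⟶ pullback (R.D (m + 1)) z :=
  pullback.lift (R.D m) 0 (by rw [R.comp, zero_comp])

lemma toPullback_fst : R.toPullback z ≫ pullback.fst _ _ = R.D m := pullback.lift_fst _ _ _

lemma toPullback_snd : R.toPullback z ≫ pullback.snd _ _ = 0 := pullback.lift_snd _ _ _

lemma comp_toPullback {i : ℕ} (h : i + 1 = m) :
    R.D i ≫ eqToHom (congrArg R.G h) ≫ R.toPullback z = 0 := by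
  subst h
  ext1
  · simp [R.comp, toPullback_fst]
  · simp [toPullback_snd]

lemma locExact_toPullback :
    LocExact (m + 1) 𝒳 (R.toPullback z) (pullback.snd (R.D (m + 1)) z) := by
  have := R.additive (m + 1)
  intro X x hx
  obtain ⟨V, g, hg, y, hy⟩ := R.exact m X ((pullback.fst (R.D (m + 1)) z).app (op X) x) (by
    refine (ConcreteCategory.congr_hom (NatTrans.congr_app
      (pullback.condition (f := R.D (m + 1)) (g := z)) (op X)) x).trans ?_
    exact (congrArg (z.app (op X)) hx).trans (map_zero _))
  refine ⟨V, g, hg, y, toElt_pullback_ext ?_ ?_⟩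
  · refine (ConcreteCategory.congr_hom (NatTrans.congr_app (R.toPullback_fst z) (op V)) y).trans ?_
    exact hy.trans
      (ConcreteCategory.congr_hom ((pullback.fst (R.D (m + 1)) z).naturality g.op) x).symm
  · refine (ConcreteCategory.congr_hom (NatTrans.congr_app (R.toPullback_snd z) (op V)) y).trans ?_
    refine Eq.trans ?_
      (ConcreteCategory.congr_hom ((pullback.snd (R.D (m + 1)) z).naturality g.op) x).symm
    refine Eq.symm ((congrArg ((preadditiveYoneda.obj B).map g.op) hx).trans (map_zero _))

lemma locExact_pullback_snd (hz : z ≫ R.D (m + 2) = 0) 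
    {H : Mᵒᵖ ⥤ AddCommGrpCat.{u}} (β : preadditiveYoneda.obj B ⟶ H) :
    LocExact (m + 1) 𝒳 (pullback.snd (R.D (m + 1)) z) β := by
  have := R.additive (m + 1)
  intro X x _
  obtain ⟨V, g, hg, y, hy⟩ := R.exact (m + 1) X (z.app (op X) x)
    (ConcreteCategory.congr_hom (NatTrans.congr_app hz (op X)) x)
  obtain ⟨w, -, hw⟩ := exists_pullback_elt y ((preadditiveYoneda.obj B).map g.op x)
    (hy.trans (ConcreteCategory.congr_hom (z.naturality g.op) x).symm)
  exact ⟨V, g, hg, w, hw⟩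

theorem exists_pullback_repSeq (h𝒳 : IsNExactStructure (m + 1) 𝒳) (hz : z ≫ R.D (m + 2) = 0) :
    ∃ S : RepSeq M (m + 1) A B, S.Good 𝒳 ∧
      ∀ (T : RepSeq M (m + 1) A B) (e : ∀ i, T.F i ⟶ R.G i),
        (∀ i, i ≤ m + 1 → T.τ i ≫ e (i + 1) = e i ≫ R.D i) →
        e 0 = eqToHom (T.hF0.trans R.hG0.symm) → e (m + 2) = eqToHom T.hFtop ≫ z →
        RepSeqConnects T S := by
  have hadd := R.additive
  obtain ⟨F, τ, θ, κ, h0, hQ, hτ, hτm, hτQ, hθ0⟩ := exists_splice_pair R.G R.D m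
    (R.toPullback z) (pullback.snd (R.D (m + 1)) z)
  have hτ' (i : ℕ) (hi : i < m) : τ i = (θ i hi.le).hom ≫ R.D i ≫ (θ (i + 1) hi).inv := by
    rw [← Category.assoc, Iso.eq_comp_inv, hτ i hi]
  have hτm' : τ m = (θ m le_rfl).hom ≫ R.toPullback z ≫ κ.inv := by
    rw [← Category.assoc, Iso.eq_comp_inv, hτm]
  have hτQ' : τ (m + 1) = κ.hom ≫ pullback.snd (R.D (m + 1)) z ≫ eqToHom hQ.symm := by
    rw [← Category.assoc, ← hτQ]
    simp
  have hτfst (i : ℕ) (hi : i ≤ m) : ∃ ψ : F (i + 1) ⟶ R.G (i + 1),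
      τ i ≫ ψ = (θ i hi).hom ≫ R.D i := by
    obtain hlt | rfl := hi.lt_or_eq
    · exact ⟨_, hτ i hlt⟩
    · exact ⟨κ.hom ≫ pullback.fst (R.D (i + 1)) z, by rw [reassoc_of% hτm, toPullback_fst]⟩
  have hcomp (i : ℕ) (hi : i + 1 ≤ m + 1) : τ i ≫ τ (i + 1) = 0 := by
    obtain hlt | rfl := (Nat.le_of_succ_le_succ hi).lt_or_eq
    · rw [hτ' i hlt]
      obtain hlt' | rfl := (Nat.succ_le_of_lt hlt).lt_or_eq
      · rw [hτ' (i + 1) hlt']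
        simp only [Category.assoc, Iso.inv_hom_id_assoc, reassoc_of% (R.comp i), zero_comp,
          comp_zero]
      · rw [hτm']
        have := R.comp_toPullback z (i := i) rfl
        simp only [eqToHom_refl, Category.id_comp] at this
        simp only [Category.assoc, Iso.inv_hom_id_assoc, reassoc_of% this, zero_comp, comp_zero]
    · rw [hτm', hτQ']
      simp only [Category.assoc, Iso.inv_hom_id_assoc, reassoc_of% (R.toPullback_snd z),
        zero_comp, comp_zero]
  have hsheaf := fun i => (R.acyclicOn h𝒳 (by omega) i).sheafOn
  refine ⟨⟨F, τ, h0.trans R.hG0, hQ, hcomp⟩, ⟨fun i h1 hi => ?_, ?_⟩, fun T e he he0 hetop => ?_⟩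
  · dsimp only
    obtain hlt | rfl := hi.lt_or_eq
    · have := Functor.additive_of_iso (θ i (by omega)).symm
      exact ⟨this, ((hsheaf i).of_iso (θ i (by omega))).effClosed h𝒳⟩
    · have := Functor.additive_of_iso κ.symm
      exact ⟨this, (((hsheaf _).pullback (acyclicOn_yoneda h𝒳 B).sheafOn (hsheaf _) _ _).of_iso
        κ).effClosed h𝒳⟩
  · rw [RepSeq.homologyWeaklyEffaceable_iff]
    dsimp only
    refine ⟨?_, fun i hi => ?_, ?_⟩
    · obtain ⟨ψ, hψ⟩ := hτfst 0 (Nat.zero_le m)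
      exact R.exact_zero.of_retract (θ 0 (Nat.zero_le m)).inv (θ 0 _).hom (θ 0 _).inv ψ
        (Iso.hom_inv_id _) (by simp) hψ
    · obtain hlt | rfl := (Nat.le_of_succ_le_succ hi).lt_or_eq
      · obtain ⟨ψ, hψ⟩ := hτfst (i + 1) hlt
        refine (R.exact i).of_retract (θ i hlt.le).inv (θ (i + 1) hlt).hom (θ (i + 1) hlt).inv ψ
          (Iso.hom_inv_id _) ?_ hψ
        rw [hτ' i hlt, Iso.inv_hom_id_assoc]
      · refine (R.locExact_toPullback z).of_retract (θ i le_rfl).inv κ.hom κ.inv (eqToHom hQ)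
          (Iso.hom_inv_id _) ?_ hτQ
        rw [hτm', Iso.inv_hom_id_assoc]
    · refine (R.locExact_pullback_snd z hz (0 : _ ⟶ preadditiveYoneda.obj B)).of_retract κ.inv
        (eqToHom hQ) (eqToHom hQ.symm) (eqToHom hQ) (by simp) ?_ (by simp)
      rw [hτQ', Iso.inv_hom_id_assoc]
  · have hl : e (m + 1) ≫ R.D (m + 1) = (T.τ (m + 1) ≫ eqToHom T.hFtop) ≫ z := by
      rw [← he (m + 1) le_rfl, hetop, Category.assoc]
    obtain ⟨L, hL₁, hL₂⟩ : ∃ L : T.F (m + 1) ⟶ pullback (R.D (m + 1)) z,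
        L ≫ pullback.fst _ _ = e (m + 1) ∧
        L ≫ pullback.snd _ _ = T.τ (m + 1) ≫ eqToHom T.hFtop :=
      ⟨pullback.lift _ _ hl, pullback.lift_fst _ _ _, pullback.lift_snd _ _ _⟩
    let φ : ∀ i, T.F i ⟶ F i := fun i =>
      if h : i ≤ m then e i ≫ (θ i h).inv
      else if h : i = m + 1 then eqToHom (congrArg T.F h) ≫
        L ≫ κ.inv ≫ eqToHom (congrArg F h.symm)
      else if h : i = m + 2 then eqToHom (by rw [h, hQ, ← T.hFtop]) else 0
    have hφ (i : ℕ) (h : i ≤ m) : φ i = e i ≫ (θ i h).inv := dif_pos h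
    have hφm : φ (m + 1) = L ≫ κ.inv := by simp [φ]
    have hφtop : φ (m + 2) = eqToHom (T.hFtop.trans hQ.symm) := by
      simp [φ]
    refine ⟨φ, fun i hi => ?_, ?_, hφtop⟩
    · dsimp only
      obtain hlt | rfl := hi.lt_or_eq
      · rw [hφ i (by omega)]
        obtain hlt' | rfl := (Nat.le_of_lt_succ hlt).lt_or_eq
        · rw [hφ (i + 1) hlt', hτ' i hlt', reassoc_of% (he i hi)]
          simp
        · rw [hφm, hτm']
          simp only [Category.assoc, Iso.inv_hom_id_assoc]
          rw [← Category.assoc, ← Category.assoc, cancel_mono]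
          ext1
          · rw [Category.assoc, hL₁, he i hi, Category.assoc, toPullback_fst]
          · rw [Category.assoc, hL₂, Category.assoc, toPullback_snd, comp_zero, ← Category.assoc,
              T.isComplex i le_rfl, zero_comp]
      · rw [hφtop, hφm, hτQ', Category.assoc, Iso.inv_hom_id_assoc, reassoc_of% hL₂,
          eqToHom_trans]
    · rw [hφ 0 (Nat.zero_le m), he0]
      rw [Iso.comp_inv_eq, hθ0, eqToHom_trans]

end Resolution

/-! ### Admissible sequences realizing a class -/

lemma exists_chainMap_of_last {C : Type*} [Category C] [Preadditive C] (S T : ℕ → C)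
    (dS : ∀ i, S i ⟶ S (i + 1)) (dT : ∀ i, T i ⟶ T (i + 1)) (N : ℕ)
    (hS : ∀ i, i + 1 ≤ N → dS i ≫ dS (i + 1) = 0)
    (hlift : ∀ i, i + 1 ≤ N → ∀ x : S i ⟶ T (i + 1), x ≫ dT (i + 1) = 0 →
      ∃ y : S i ⟶ T i, y ≫ dT i = x)
    (c : S N ⟶ T N) (c' : S (N + 1) ⟶ T (N + 1)) (h : dS N ≫ c' = c ≫ dT N) :
    ∃ f : ∀ i, S i ⟶ T i, f (N + 1) = c' ∧ ∀ i, i ≤ N → dS i ≫ f (i + 1) = f i ≫ dT i := by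
  suffices H : ∀ k, k ≤ N → ∃ f : ∀ i, S i ⟶ T i, f (N + 1) = c' ∧
      ∀ i, N ≤ i + k → i ≤ N → dS i ≫ f (i + 1) = f i ≫ dT i by
    obtain ⟨f, hf, hf'⟩ := H N le_rfl
    exact ⟨f, hf, fun i hi => hf' i (by omega) hi⟩
  intro k hk
  induction k with
  | zero =>
    refine ⟨Function.update (Function.update (fun _ => 0) N c) (N + 1) c', by simp,
      fun i h1 h2 => ?_⟩
    obtain rfl : i = N := by omega
    simpa using h
  | succ k ih =>
    obtain ⟨f, hf, hf'⟩ := ih (by omega)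
    obtain ⟨j, rfl⟩ : ∃ j, N = j + 1 + k := ⟨N - k - 1, by omega⟩
    obtain ⟨y, hy⟩ := hlift j (by omega) (dS j ≫ f (j + 1)) (by
      rw [Category.assoc, ← hf' (j + 1) (by omega) (by omega), ← Category.assoc, hS j (by omega),
        zero_comp])
    refine ⟨Function.update f j y, ?_, fun i h1 h2 => ?_⟩
    · rw [Function.update_of_ne (by omega), hf]
    · obtain rfl | hne := eq_or_ne i j
      · rw [Function.update_self, Function.update_of_ne (by omega), hy]
      · rw [Function.update_of_ne (by omega), Function.update_of_ne hne, hf' i (by omega) h2]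

section Realize

variable {𝒳 : Set (NSeq M)} {A B : M}

lemma IsNExactStructure.locExact_map_first {n : ℕ} (h𝒳 : IsNExactStructure n 𝒳) (hn : 1 ≤ n)
    {Z : NSeq M} (hZ : Z ∈ 𝒳) :
    LocExact n 𝒳 (0 : preadditiveYoneda.obj (Z.X 0) ⟶ preadditiveYoneda.obj (Z.X 0))
      (preadditiveYoneda.map (Z.d 0)) := by
  intro X (f : X ⟶ Z.X 0) (hf : f ≫ Z.d 0 = 0)
  obtain rfl := h𝒳.eq_zero_of_map_first hZ hf
  obtain ⟨V, g, hg⟩ := h𝒳.exists_admEpi hn X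
  exact ⟨V, g, hg, 0, (comp_zero (f := g) (Z := Z.X 0)).symm⟩

lemma IsNExactStructure.good_repSeqOf {n : ℕ} (h𝒳 : IsNExactStructure n 𝒳) (hn : 1 ≤ n)
    {Z : NSeq M} (hZ : Z ∈ 𝒳) (h0 : Z.X 0 = A) (htop : Z.X (n + 1) = B) (hcx : Z.IsComplex n) :
    (repSeqOf n Z h0 htop hcx).Good 𝒳 := by
  refine ⟨fun i _ _ => ?_, ?_⟩
  · change (preadditiveYoneda.obj (Z.X i)).Additive ∧ EffClosed n 𝒳 (preadditiveYoneda.obj (Z.X i))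
    exact ⟨inferInstance, (acyclicOn_yoneda h𝒳 (Z.X i)).sheafOn.effClosed h𝒳⟩
  · rw [RepSeq.homologyWeaklyEffaceable_iff]
    exact ⟨h𝒳.locExact_map_first hn hZ, fun i hi => h𝒳.locExact_map hn hZ hi,
      h𝒳.locExact_map_last hn hZ _⟩

namespace Resolution

variable {m : ℕ} (R : Resolution (m + 1) 𝒳 A)

lemma exists_chainMap_of_mem (h𝒳 : IsNExactStructure (m + 1) 𝒳) {T : NSeq M} (hT : T ∈ 𝒳)
    (f₀ : preadditiveYoneda.obj (T.X 0) ⟶ R.G 0) :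
    ∃ ψ : ∀ i, preadditiveYoneda.obj (T.X i) ⟶ R.G i, ψ 0 = f₀ ∧
      ∀ i, i ≤ m + 1 → preadditiveYoneda.map (T.d i) ≫ ψ (i + 1) = ψ i ≫ R.D i := by
  obtain ⟨f₁, hf₁⟩ := (R.inj 0).2 _ _ inferInstance (h𝒳.locExact_map_first (by omega) hT)
    (f₀ ≫ R.D 0) zero_comp
  obtain ⟨ψ, hψ0, -, hψ⟩ := exists_chainMap (fun i => preadditiveYoneda.obj (T.X i)) R.G
    (fun i => preadditiveYoneda.map (T.d i)) R.D (m + 2) (fun i _ => R.comp i)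
    (fun i hi α hα => (R.acyclicOn h𝒳 (by omega) (i + 2) T hT).1 i (by omega) α hα) f₀ f₁ hf₁
  exact ⟨ψ, hψ0, fun i hi => hψ i (by omega)⟩

lemma exists_homotopy_last (h𝒳 : IsNExactStructure (m + 1) 𝒳) {X : NSeq M} (hX : X ∈ 𝒳)
    (f : ∀ i, preadditiveYoneda.obj (X.X i) ⟶ R.G i)
    (hf : ∀ i, i ≤ m + 1 → preadditiveYoneda.map (X.d i) ≫ f (i + 1) = f i ≫ R.D i)
    (hf0 : f 0 = 0) :
    ∃ s : preadditiveYoneda.obj (X.X (m + 2)) ⟶ R.G (m + 1), f (m + 2) = s ≫ R.D (m + 1) := by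
  obtain ⟨h, -, hh⟩ := exists_homotopy (fun i => preadditiveYoneda.obj (X.X i)) R.G
    (fun i => preadditiveYoneda.map (X.d i)) R.D (m + 1) (fun i _ => R.comp i)
    (fun i hi α hα => (R.acyclicOn h𝒳 (by omega) (i + 1) X hX).1 i hi α hα) f
    (fun i hi => hf i (by omega)) hf0
  refine ⟨h (m + 1), ?_⟩
  rw [← sub_eq_zero]
  refine (R.acyclicOn h𝒳 (by omega) (m + 2) X hX).2 _ ?_
  rw [Preadditive.comp_sub, sub_eq_zero]
  refine (hf (m + 1) le_rfl).trans ?_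
  rw [hh m le_rfl, Preadditive.add_comp, Category.assoc, R.comp, comp_zero, zero_add,
    Category.assoc]

theorem exists_realization (h𝒳 : IsNExactStructure (m + 1) 𝒳)
    (z : preadditiveYoneda.obj B ⟶ R.G (m + 2)) (hz : z ≫ R.D (m + 2) = 0) :
    ∃ T ∈ 𝒳, ∃ (h0 : T.X 0 = A) (htop : T.X (m + 2) = B)
      (ψ : ∀ i, preadditiveYoneda.obj (T.X i) ⟶ R.G i),
      (∀ i, i ≤ m + 1 → preadditiveYoneda.map (T.d i) ≫ ψ (i + 1) = ψ i ≫ R.D i) ∧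
      ψ 0 = eqToHom ((congrArg preadditiveYoneda.obj h0).trans R.hG0.symm) ∧
      ψ (m + 2) = eqToHom (congrArg preadditiveYoneda.obj htop) ≫ z := by
  obtain ⟨V, g, ⟨X, hX, rfl, rfl, hd⟩, y, hy⟩ := R.exists_local_lift hz
  obtain rfl : X.d (m + 1) = g := by simpa using hd
  obtain ⟨c, hctop, hc⟩ := exists_chainMap_of_last (fun i => preadditiveYoneda.obj (X.X i)) R.G
    (fun i => preadditiveYoneda.map (X.d i)) R.D (m + 1)
    (fun i hi => by rw [← Functor.map_comp, (h𝒳.nExact X hX).1 i hi, Functor.map_zero])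
    (fun i hi x hx => R.exists_lift h𝒳 (by omega) i hi _ x hx) y z hy.symm
  obtain ⟨f₀, hf₀⟩ := preadditiveYoneda.map_surjective (c 0 ≫ eqToHom R.hG0)
  obtain ⟨T, hT, h0, htop, t, ht, ht0, httop⟩ := h𝒳.exists_pushout (by omega) hX f₀
  obtain ⟨ψ, hψ0, hψ⟩ := R.exists_chainMap_of_mem h𝒳 hT
    (eqToHom ((congrArg preadditiveYoneda.obj h0).trans R.hG0.symm))
  obtain ⟨s, hs⟩ := R.exists_homotopy_last h𝒳 hX
    (fun i => preadditiveYoneda.map (t i) ≫ ψ i - c i) (fun i hi => by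
      rw [Preadditive.comp_sub, Preadditive.sub_comp, ← hc i hi, ← Category.assoc,
        ← Functor.map_comp, ht i hi, Functor.map_comp, Category.assoc, hψ i hi, Category.assoc])
    (by
      rw [ht0, hψ0, Functor.map_comp, hf₀, eqToHom_map]
      simp)
  have hs' : ψ (m + 2) - eqToHom (congrArg preadditiveYoneda.obj htop) ≫ z =
      (eqToHom (congrArg preadditiveYoneda.obj htop) ≫ s) ≫ R.D (m + 1) := by
    rw [Category.assoc, ← hs, hctop, httop, eqToHom_map, Preadditive.comp_sub]
    simp
  generalize eqToHom (congrArg preadditiveYoneda.obj htop) ≫ s = s' at hs'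
  refine ⟨T, hT, h0, htop, Function.update (Function.update ψ (m + 1)
    (ψ (m + 1) - preadditiveYoneda.map (T.d (m + 1)) ≫ s')) (m + 2)
      (eqToHom (congrArg preadditiveYoneda.obj htop) ≫ z), fun i hi => ?_, ?_, by simp⟩
  · obtain hlt | rfl := hi.lt_or_eq
    · rw [Function.update_of_ne (by omega : i + 1 ≠ m + 2),
        Function.update_of_ne (by omega : i ≠ m + 2), Function.update_of_ne (by omega : i ≠ m + 1)]
      obtain hlt' | rfl := (Nat.le_of_lt_succ hlt).lt_or_eq
      · rw [Function.update_of_ne (by omega), hψ i hi]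
      · rw [Function.update_self, Preadditive.comp_sub, hψ i hi, ← Category.assoc,
          ← Functor.map_comp, (h𝒳.nExact T hT).1 i le_rfl, Functor.map_zero, zero_comp, sub_zero]
    · rw [Function.update_self, Function.update_of_ne (by omega), Function.update_self,
        Preadditive.sub_comp, ← hψ (m + 1) le_rfl, Category.assoc, ← hs', Preadditive.comp_sub,
        sub_sub_cancel]
  · rw [Function.update_of_ne (by omega), Function.update_of_ne (by omega), hψ0]

lemma exists_chainMap_of_good {ξ : RepSeq M (m + 1) A B} (hξ : ξ.Good 𝒳) :
    ∃ z : preadditiveYoneda.obj B ⟶ R.G (m + 2), z ≫ R.D (m + 2) = 0 ∧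
      ∃ e : ∀ i, ξ.F i ⟶ R.G i, (∀ i, i ≤ m + 1 → ξ.τ i ≫ e (i + 1) = e i ≫ R.D i) ∧
        e 0 = eqToHom (ξ.hF0.trans R.hG0.symm) ∧ e (m + 2) = eqToHom ξ.hFtop ≫ z := by
  obtain ⟨hadd, hloc⟩ := hξ
  obtain ⟨hl0, hl, hltop⟩ := ξ.homologyWeaklyEffaceable_iff.1 hloc
  have hadd' (i : ℕ) (h1 : 1 ≤ i) (hi : i ≤ m + 2) : (ξ.F i).Additive := by
    obtain hlt | rfl := hi.lt_or_eq
    · exact (hadd i h1 (by omega)).1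
    · rw [show ξ.F (m + 2) = _ from ξ.hFtop]
      infer_instance
  obtain ⟨e₁, he₁⟩ := (R.inj 0).2 _ _ (hadd' 1 le_rfl (by omega)) hl0
    (eqToHom (ξ.hF0.trans R.hG0.symm) ≫ R.D 0) zero_comp
  obtain ⟨e, he0, -, he⟩ := exists_chainMap ξ.F R.G ξ.τ R.D (m + 2) (fun i _ => R.comp i)
    (fun i hi α hα => (R.inj (i + 1)).2 _ _ (hadd' (i + 2) (by omega) hi) (hl i (by omega)) α hα)
    _ e₁ he₁
  have hD : e (m + 2) ≫ R.D (m + 2) = 0 := by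
    obtain ⟨β, hβ⟩ := (R.inj (m + 2)).2 _ _ (hadd' (m + 2) (by omega) le_rfl) hltop
      (e (m + 2) ≫ R.D (m + 2)) (by
        refine (Category.assoc _ _ _).symm.trans ?_
        rw [he (m + 1) le_rfl, Category.assoc, R.comp, comp_zero])
    rw [← hβ, zero_comp]
  refine ⟨eqToHom ξ.hFtop.symm ≫ e (m + 2), ?_, e, fun i hi => he i (by omega), he0, ?_⟩
  · exact (Category.assoc _ _ _).trans ((congrArg _ hD).trans comp_zero)
  · simp

end Resolution

end Realize

end Auxiliary

/-- Let `(M,𝒳)` be a small `n`-exact category, `Y, X^{n+1} ∈ M`, and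
`ξ : 0 → H_Y → E¹ → ⋯ → Eⁿ → H_{X^{n+1}} → 0` a complex in `Mod(M)` whose middle terms are
additive and `Eff`-closed and all of whose homology is weakly effaceable (an `n`-fold extension
of `H_{X^{n+1}}` by `H_Y` in the localization of `Mod(M)` at the weakly effaceable functors).
Then there is an `𝒳`-admissible `n`-exact sequence `Y → Y¹ → ⋯ → Yⁿ → X^{n+1}` in `M` such
that `ξ` is connected to its complex of representables by a finite zigzag of complexes of the
same form, via morphisms of complexes restricting to the identity on `H_Y` and `H_{X^{n+1}}`:
up to Yoneda equivalence, the essential image of `M` in the localization is closed under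
`n`-extensions. -/
theorem exists_admissible_yoneda_equivalent
    {M : Type u} [SmallCategory M] [Preadditive M] [HasFiniteBiproducts M]
    (n : ℕ) (hn : 1 ≤ n) (𝒳 : Set (NSeq M)) (h𝒳 : IsNExactStructure n 𝒳)
    (A B : M) (ξ : RepSeq M n A B) (hξ : ξ.Good 𝒳) :
    ∃ (Z : NSeq M) (hZ : Z ∈ 𝒳) (h0 : Z.X 0 = A) (htop : Z.X (n + 1) = B),
      Relation.ReflTransGen (RepSeqStep 𝒳) ξ
        (repSeqOf n Z h0 htop (h𝒳.nExact Z hZ).1) := by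
  obtain ⟨m, rfl⟩ : ∃ m, n = m + 1 := ⟨n - 1, by omega⟩
  obtain ⟨R⟩ := h𝒳.nonempty_resolution hn A
  obtain ⟨z, hz, e, he, he0, hetop⟩ := R.exists_chainMap_of_good hξ
  obtain ⟨S, hS, hconn⟩ := R.exists_pullback_repSeq z h𝒳 hz
  obtain ⟨T, hT, h0, htop, ψ, hψ, hψ0, hψtop⟩ := R.exists_realization h𝒳 z hz
  refine ⟨T, hT, h0, htop, .tail (.single ⟨hξ, hS, .inl (hconn ξ e he he0 hetop)⟩) ?_⟩
  exact ⟨hS, h𝒳.good_repSeqOf hn hT h0 htop _, .inr (hconn _ ψ hψ hψ0 hψtop)⟩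

end NExactCat
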